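/- arXiv:1504.06748 — 3 statements merged into one kernel-verified Lean document; each statement's English description precedes it below -/
import Mathlib

section
/- Let S be a semioval of size q + 3 in PG(2,q). Then one of the following holds: q = 5 and S is the symmetric difference of two lines with one further point removed from both lines; or q = 9 and S is projectively equivalent to the Blokhuis semioval; or p = 3 and S is a (q+3,3)-arc, i.e. every line of PG(2,q) meets S in at most 3 points. -/
/-! Common setup: the Desarguesian projective plane `PG(2,q)` over a finite field `F = GF(q)`.
Points are the projective points of `F³`; lines are the 2-dimensional linear subspaces of `F³`,
with incidence given by containment. -/

/-- Points of `PG(2,F)`. -/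
abbrev PGPoint (F : Type*) [Field F] := Projectivization F (Fin 3 → F)

/-- Lines of `PG(2,F)`: the 2-dimensional linear subspaces of `F³`. -/
abbrev PGLine (F : Type*) [Field F] := {W : Submodule F (Fin 3 → F) // Module.finrank F W = 2}

/-- Incidence between a point and a line of `PG(2,F)`. -/
def pgMem {F : Type*} [Field F] (P : PGPoint F) (L : PGLine F) : Prop :=
  P.submodule ≤ L.val

/-- The number of points of the point set `B` lying on the line `L`;
`L` is a *`k`-secant* of `B` if `nsec B L = k`, a *tangent* if `k = 1`,
a *bisecant* if `k = 2` and a *trisecant* if `k = 3`. -/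
noncomputable def nsec {F : Type*} [Field F] (B : Set (PGPoint F)) (L : PGLine F) : ℕ :=
  {P ∈ B | pgMem P L}.ncard

/-- A blocking set: a point set meeting every line. -/
def isBlocking {F : Type*} [Field F] (B : Set (PGPoint F)) : Prop :=
  ∀ L : PGLine F, ∃ P ∈ B, pgMem P L

/-- A minimal blocking set: every point is essential. -/
def isMinimalBlocking {F : Type*} [Field F] (B : Set (PGPoint F)) : Prop :=
  isBlocking B ∧ ∀ P ∈ B, ¬ isBlocking (B \ {P})

/-- `B` is a blocking set of Rédei type with Rédei line `ℓ`: a blocking set of size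
`q + N ≤ 2q` such that `ℓ` meets `B` in exactly `N = |B| − q` points. -/
def isRedeiWithLine {F : Type*} [Field F] (q : ℕ) (B : Set (PGPoint F)) (ℓ : PGLine F) : Prop :=
  isBlocking B ∧ B.ncard ≤ 2 * q ∧ nsec B ℓ + q = B.ncard

/-- A semioval: through each of its points there passes exactly one tangent. -/
def isSemioval {F : Type*} [Field F] (S : Set (PGPoint F)) : Prop :=
  ∀ P ∈ S, ∃! t : PGLine F, pgMem P t ∧ nsec S t = 1

/-- A vector of `F³` with some coordinate equal to `1` is nonzero. -/
lemma vec_ne_zero_of_coord_one {F : Type*} [Field F] (v : Fin 3 → F) (i : Fin 3)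
    (hvi : v i = 1) : v ≠ 0 := by
  intro h0; rw [h0] at hvi; simp at hvi

/-- The Blokhuis semioval in `PG(2,q)`, `q` odd: the point set
`{(0,1,s), (s,0,1), (1,s,0) : −s is not a square in GF(q)}` (homogeneous coordinates). -/
def blokhuisSemioval (F : Type*) [Field F] : Set (PGPoint F) :=
  {P : PGPoint F | ∃ s : F, ¬ IsSquare (-s) ∧
    (P = Projectivization.mk F ![0, 1, s] (vec_ne_zero_of_coord_one _ 1 rfl) ∨
     P = Projectivization.mk F ![s, 0, 1] (vec_ne_zero_of_coord_one _ 2 rfl) ∨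
     P = Projectivization.mk F ![1, s, 0] (vec_ne_zero_of_coord_one _ 0 rfl))}

/-- Two point sets of `PG(2,q)` are projectively equivalent if one is the image of the other
under an element of `PGL(3,q)`, i.e. under the map induced by an invertible linear map of `F³`. -/
def projEquivalent {F : Type*} [Field F] (A B : Set (PGPoint F)) : Prop :=
  ∃ g : (Fin 3 → F) ≃ₗ[F] (Fin 3 → F),
    Projectivization.map (σ := RingHom.id F) g.toLinearMap g.injective '' A = B

/-- `S` is the symmetric difference of two lines with one further point removed from both
lines. -/
def isSymmDiffOfTwoLinesMinusTwoPoints {F : Type*} [Field F] (S : Set (PGPoint F))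
    (ℓ₁ ℓ₂ : PGLine F) : Prop :=
  ℓ₁ ≠ ℓ₂ ∧ ∃ P₁ P₂ : PGPoint F,
    pgMem P₁ ℓ₁ ∧ ¬ pgMem P₁ ℓ₂ ∧ pgMem P₂ ℓ₂ ∧ ¬ pgMem P₂ ℓ₁ ∧
    S = (({P | pgMem P ℓ₁} \ {P | pgMem P ℓ₂}) ∪ ({P | pgMem P ℓ₂} \ {P | pgMem P ℓ₁}))
        \ {P₁, P₂}

/-- An injective `F`-valued map on a set of `|F| - 1` points misses minus the sum of its values. -/
lemma ne_neg_sum_of_injOn {F α : Type*} [Field F] [Fintype F] (hq : 2 < Fintype.card F)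
    (T : Finset α) (hT : T.card + 1 = Fintype.card F) (g : α → F) (hg : Set.InjOn g T) :
    ∀ v ∈ T, g v ≠ -∑ w ∈ T, g w := by
  classical
  have hc : (T.image g)ᶜ.card = 1 := by
    rw [Finset.card_compl, Finset.card_image_of_injOn hg]; omega
  obtain ⟨c, hc⟩ := Finset.card_eq_one.mp hc
  have h0 : ∑ x : F, x = 0 := by
    simpa using FiniteField.sum_pow_lt_card_sub_one F 1 (by omega)
  rw [← Finset.sum_add_sum_compl (T.image g), hc, Finset.sum_singleton,
    Finset.sum_image hg] at h0
  intro v hv h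
  have hcv : c = g v := by rw [h]; linear_combination h0
  have : c ∈ (T.image g)ᶜ := by rw [hc]; simp
  rw [Finset.mem_compl] at this
  exact this (hcv ▸ Finset.mem_image_of_mem g hv)

/-- Wilson's theorem for finite fields, centred at `a`. -/
lemma prod_erase_sub_eq_neg_one {F : Type*} [Field F] [Fintype F] [DecidableEq F] (a : F) :
    ∏ x ∈ Finset.univ.erase a, (x - a) = -1 := by
  rw [← Units.val_one, ← Units.val_neg, ← FiniteField.prod_univ_units_id_eq_neg_one (K := F),
    Units.coe_prod]
  symm
  refine Finset.prod_bij (fun (u : Fˣ) _ => (u : F) + a) ?_ ?_ ?_ ?_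
  · intro u _; simp
  · intro u _ v _ h; exact Units.ext (by simpa using h)
  · intro b hb
    refine ⟨Units.mk0 (b - a) (sub_ne_zero.mpr (Finset.ne_of_mem_erase hb)), Finset.mem_univ _, ?_⟩
    simp
  · intro u _; simp

/-- The differences from a fixed point, for a map that is bijective onto `F`, multiply to `-1`. -/
lemma prod_erase_map_sub_eq_neg_one {F α : Type*} [Field F] [Fintype F] [DecidableEq α]
    (U : Finset α) (hU : U.card = Fintype.card F) (g : α → F) (hg : Set.InjOn g U)
    {u : α} (hu : u ∈ U) : ∏ v ∈ U.erase u, (g v - g u) = -1 := by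
  classical
  have hi : U.image g = Finset.univ := by
    rw [← Finset.card_eq_iff_eq_univ, Finset.card_image_of_injOn hg, hU]
  rw [← prod_erase_sub_eq_neg_one (g u), ← hi]
  have : (U.image g).erase (g u) = (U.erase u).image g := by
    ext x
    simp only [Finset.mem_erase, Finset.mem_image]
    constructor
    · rintro ⟨hx, v, hv, rfl⟩
      exact ⟨v, ⟨fun h => hx (h ▸ rfl), hv⟩, rfl⟩
    · rintro ⟨v, ⟨hv, hvU⟩, rfl⟩
      exact ⟨fun h => hv (hg hvU hu h), v, hvU, rfl⟩
  rw [this, Finset.prod_image (hg.mono (by simp))]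

/-- A monic cubic is determined by its values at three points; here those of
`-(d - t) m'(d)` at the roots `d` of a monic cubic `m`. -/
lemma cubic_eq_polar {F : Type*} [Field F] {a b c s e f t : F} (hab : a ≠ b) (hac : a ≠ c)
    (hbc : b ≠ c)
    (ha : (s - a) * (e - a) * (f - a) = -((t - a) * ((b - a) * (c - a))))
    (hb : (s - b) * (e - b) * (f - b) = -((t - b) * ((a - b) * (c - b))))
    (hc : (s - c) * (e - c) * (f - c) = -((t - c) * ((a - c) * (b - c)))) (y : F) :
    (y - s) * (y - e) * (y - f) = 4 * ((y - a) * (y - b) * (y - c)) -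
      ((y - a) * (y - b) + (y - a) * (y - c) + (y - b) * (y - c)) * (y - t) := by
  have hab₀ := sub_ne_zero.mpr hab
  have hac₀ := sub_ne_zero.mpr hac
  have hbc₀ := sub_ne_zero.mpr hbc
  have key : (a - b) * (a - c) * (b - c) * ((y - s) * (y - e) * (y - f)) =
      (a - b) * (a - c) * (b - c) * (4 * ((y - a) * (y - b) * (y - c)) -
      ((y - a) * (y - b) + (y - a) * (y - c) + (y - b) * (y - c)) * (y - t)) := by
    linear_combination (-(b - c) * (y - b) * (y - c)) * ha + ((a - c) * (y - a) * (y - c)) * hb -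
      ((a - b) * (y - a) * (y - b)) * hc
  exact mul_left_cancel₀ (mul_ne_zero (mul_ne_zero hab₀ hac₀) hbc₀) key

/-- Let `T ∪ {Q}` be a set of `|F|` affine points determining no direction of `D ∪ {∞}`, `|D| = 3`,
and let `u ∈ T` be a point from which `T` is seen in every direction outside `D ∪ {∞, t}`.
The three excess directions in which `T ∪ {Q}` is seen from `u`, the direction `s` of `Q` among
them, are the roots of the first polar of `t` with respect to the binary quartic `D ∪ {∞}`. -/
lemma exists_polar_directions {F : Type*} [Field F] [Fintype F] [DecidableEq F]
    {T : Finset (F × F)} {Q : F × F} (hQ : Q ∉ T) (hT : T.card + 1 = Fintype.card F)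
    {a b c : F} (hab : a ≠ b) (hac : a ≠ c) (hbc : b ≠ c)
    (hx : Set.InjOn (Prod.fst : F × F → F) (insert Q T : Finset (F × F)))
    (hd : ∀ d ∈ ({a, b, c} : Finset F),
      Set.InjOn (fun v : F × F => v.2 - d * v.1) (insert Q T : Finset (F × F)))
    {u : F × F} (hu : u ∈ T) {t : F} (ht : t ∉ ({a, b, c} : Finset F))
    (hother : ∀ d, d ∉ ({a, b, c} : Finset F) → d ≠ t →
      ∃ v ∈ T, v ≠ u ∧ v.2 - d * v.1 = u.2 - d * u.1) :
    ∃ s e f : F, s ∉ ({a, b, c} : Finset F) ∧ Q.2 - s * Q.1 = u.2 - s * u.1 ∧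
      (∀ y, (y - s) * (y - e) * (y - f) = 4 * ((y - a) * (y - b) * (y - c)) -
        ((y - a) * (y - b) + (y - a) * (y - c) + (y - b) * (y - c)) * (y - t)) ∧
      ∀ x, ((T.erase u).filter (fun v => v.2 - x * v.1 = u.2 - x * u.1)).card =
        (if x ∈ insert t ({a, b, c} : Finset F) then 0 else 1) +
          ({e, f} : Multiset F).count x := by
  set D : Finset F := {a, b, c} with hDdef
  have hDcard : D.card = 3 := Finset.card_eq_three.mpr ⟨a, b, c, hab, hac, hbc, rfl⟩
  have huQ : u ≠ Q := fun h => hQ (h ▸ hu)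
  have huU : u ∈ insert Q T := Finset.mem_insert_of_mem hu
  have hUcard : (insert Q T).card = Fintype.card F := by rw [Finset.card_insert_of_notMem hQ, hT]
  have hUe : (insert Q T).erase u = insert Q (T.erase u) := Finset.erase_insert_of_ne huQ.symm
  let σ : F × F → F := fun v => (v.2 - u.2) / (v.1 - u.1)
  have hxne : ∀ v ∈ insert Q T, v ≠ u → v.1 - u.1 ≠ 0 := fun v hv hvu h =>
    hvu (hx hv huU (sub_eq_zero.mp h))
  have hσ : ∀ v ∈ insert Q T, v ≠ u → ∀ x, σ v = x ↔ v.2 - x * v.1 = u.2 - x * u.1 := by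
    intro v hv hvu x
    rw [div_eq_iff (hxne v hv hvu)]
    constructor <;> intro h <;> linear_combination h
  have hσT : ∀ v ∈ T.erase u, ∀ x, σ v = x ↔ v.2 - x * v.1 = u.2 - x * u.1 := fun v hv =>
    hσ v (Finset.mem_insert_of_mem (Finset.mem_of_mem_erase hv)) (Finset.ne_of_mem_erase hv)
  have hle : ((insert t D)ᶜ).val ≤ (T.erase u).val.map σ := by
    rw [Multiset.le_iff_subset (Finset.nodup _)]
    intro x hxm
    have hxm : x ∉ insert t D := Finset.mem_compl.mp hxm
    rw [Finset.mem_insert, not_or] at hxm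
    obtain ⟨v, hv, hvu, hvx⟩ := hother x hxm.2 hxm.1
    have hve := Finset.mem_erase.mpr ⟨hvu, hv⟩
    exact Multiset.mem_map.mpr ⟨v, hve, (hσT v hve x).mpr hvx⟩
  obtain ⟨E, hE⟩ := Multiset.le_iff_exists_add.mp hle
  have hEcard : E.card = 2 := by
    have h := congrArg Multiset.card hE
    rw [Multiset.card_map, Multiset.card_add, Finset.card_val, Finset.card_val,
      Finset.card_erase_of_mem hu, Finset.card_compl, Finset.card_insert_of_notMem ht, hDcard] at h
    have h1 := Finset.card_le_univ (insert t D)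
    rw [Finset.card_insert_of_notMem ht, hDcard] at h1
    omega
  obtain ⟨e, f, rfl⟩ := Multiset.card_eq_two.mp hEcard
  have hsQ := hσ Q (Finset.mem_insert_self _ _) huQ.symm
  have hprod : ∀ d ∈ D, (σ Q - d) * ((∏ n ∈ (insert t D)ᶜ, (n - d)) *
      ((e - d) * (f - d))) = 1 := by
    intro d hdD
    have h1 := prod_erase_map_sub_eq_neg_one _ hUcard _ hx huU
    have h2 := prod_erase_map_sub_eq_neg_one _ hUcard _ (hd d hdD) huU
    have h3 : ∏ v ∈ (insert Q T).erase u, ((v.2 - d * v.1) - (u.2 - d * u.1)) =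
        (∏ v ∈ (insert Q T).erase u, (σ v - d)) * ∏ v ∈ (insert Q T).erase u, (v.1 - u.1) := by
      rw [← Finset.prod_mul_distrib]
      refine Finset.prod_congr rfl fun v hv => ?_
      have := hxne v (Finset.mem_of_mem_erase hv) (Finset.ne_of_mem_erase hv)
      simp only [σ]
      field_simp
      ring
    rw [h2, h1, hUe, Finset.prod_insert (fun h => hQ (Finset.mem_of_mem_erase h))] at h3
    have h4 : ∏ v ∈ T.erase u, (σ v - d) =
        (∏ n ∈ (insert t D)ᶜ, (n - d)) * ((e - d) * (f - d)) := by
      have h5 := congrArg (fun m : Multiset F => (m.map (fun x => x - d)).prod) hE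
      simp only [Multiset.map_add, Multiset.prod_add, Multiset.map_map, Multiset.insert_eq_cons,
        Multiset.map_cons, Multiset.map_singleton, Multiset.prod_cons,
        Multiset.prod_singleton] at h5
      exact h5
    rw [h4] at h3
    linear_combination h3
  have hdir : ∀ d b' c', d ≠ b' → d ≠ c' → b' ≠ c' → D = {d, b', c'} →
      (σ Q - d) * (e - d) * (f - d) = -((t - d) * ((b' - d) * (c' - d))) := by
    intro d b' c' h1 h2 h3 hD
    have hw := prod_erase_sub_eq_neg_one d
    have ht' := ht
    rw [hD] at ht'
    simp only [Finset.mem_insert, Finset.mem_singleton, not_or] at ht'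
    have hset : Finset.univ.erase d = insert t (insert b' (insert c' (insert t D)ᶜ)) := by
      ext x
      simp only [hD, Finset.mem_erase, Finset.mem_univ, and_true, Finset.mem_insert,
        Finset.mem_compl, Finset.mem_singleton]
      by_cases hxd : x = d
      · subst hxd
        simp [h1, h2, Ne.symm ht'.1]
      · simp only [hxd]
        tauto
    rw [hset, Finset.prod_insert (by simp [hD, ht'.2]), Finset.prod_insert (by simp [hD, h3]),
      Finset.prod_insert (by simp [hD])] at hw
    have hp := hprod d (by rw [hD]; simp)
    set W := ∏ n ∈ (insert t D)ᶜ, (n - d)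
    have hW : W ≠ 0 := by
      intro h; rw [h] at hp; simp at hp
    apply mul_left_cancel₀ hW
    linear_combination hp + hw
  refine ⟨σ Q, e, f, ?_, (hsQ _).mp rfl, cubic_eq_polar hab hac hbc
    (hdir a b c hab hac hbc rfl) (hdir b a c hab.symm hbc hac ?_)
    (hdir c a b hac.symm hbc.symm hab ?_), ?_⟩
  · intro h
    exact huQ (hd _ h huU (Finset.mem_insert_self _ _) ((hsQ _).mp rfl).symm)
  · rw [hDdef]; ext x; simp; tauto
  · rw [hDdef]; ext x; simp; tauto
  · intro x
    have h := congrArg (Multiset.count x) hE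
    rw [Multiset.count_add, Multiset.count_map, ← Finset.filter_val, Finset.card_val] at h
    rw [Multiset.count_eq_of_nodup (Finset.nodup _)] at h
    rw [Finset.filter_congr (q := fun v => x = σ v)
      (fun v hv => by rw [← hσT v hv x, eq_comm]), h]
    congr 1
    simp only [Finset.mem_val, Finset.mem_compl, ite_not]

/-- Let `T` be a set of `|F| - 1` affine points determining no direction of `D ∪ {∞}`, `|D| = 3`,
such that from each point of `T` exactly one direction outside `D ∪ {∞}` is free of further points
of `T`. Then `T` is partitioned by lines through a point `Q` containing four points of `T` each. -/
theorem exists_center_of_affine_tangents {F : Type*} [Field F] [Fintype F] [DecidableEq F]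
    {T : Finset (F × F)} (hT : T.card + 1 = Fintype.card F)
    {a b c : F} (hab : a ≠ b) (hac : a ≠ c) (hbc : b ≠ c)
    (hx : Set.InjOn (Prod.fst : F × F → F) T)
    (hd : ∀ d ∈ ({a, b, c} : Finset F), Set.InjOn (fun v : F × F => v.2 - d * v.1) T)
    (htan : ∀ u ∈ T, ∃ t ∉ ({a, b, c} : Finset F),
      (∀ v ∈ T, v.2 - t * v.1 = u.2 - t * u.1 → v = u) ∧
      ∀ d, d ∉ ({a, b, c} : Finset F) → d ≠ t →
        ∃ v ∈ T, v ≠ u ∧ v.2 - d * v.1 = u.2 - d * u.1) :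
    ∃ Q ∉ T, ∀ u ∈ T, ∃ s, Q.2 - s * Q.1 = u.2 - s * u.1 ∧
      (T.filter (fun v => v.2 - s * v.1 = u.2 - s * u.1)).card = 4 := by
  have hDcard : ({a, b, c} : Finset F).card = 3 :=
    Finset.card_eq_three.mpr ⟨a, b, c, hab, hac, hbc, rfl⟩
  have hq : 2 < Fintype.card F := by
    have := Finset.card_le_univ ({a, b, c} : Finset F)
    omega
  let Q : F × F := (-∑ v ∈ T, v.1, -∑ v ∈ T, v.2)
  have hQx : ∀ v ∈ T, v.1 ≠ Q.1 := ne_neg_sum_of_injOn hq T hT _ hx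
  have hQd : ∀ d ∈ ({a, b, c} : Finset F), ∀ v ∈ T, v.2 - d * v.1 ≠ Q.2 - d * Q.1 := by
    intro d hdD v hv
    have h := ne_neg_sum_of_injOn hq T hT _ (hd d hdD) v hv
    rw [Finset.sum_sub_distrib, ← Finset.mul_sum] at h
    intro h'
    refine h (h'.trans ?_)
    simp only [Q]
    ring
  have hQ : Q ∉ T := fun h => hQx Q h rfl
  have hxU : Set.InjOn (Prod.fst : F × F → F) (insert Q T : Finset (F × F)) := by
    rw [Finset.coe_insert, Set.injOn_insert (by simpa using hQ)]
    refine ⟨hx, ?_⟩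
    rintro ⟨v, hv, h⟩
    exact hQx v hv h
  have hdU : ∀ d ∈ ({a, b, c} : Finset F),
      Set.InjOn (fun v : F × F => v.2 - d * v.1) (insert Q T : Finset (F × F)) := by
    intro d hdD
    rw [Finset.coe_insert, Set.injOn_insert (by simpa using hQ)]
    refine ⟨hd d hdD, ?_⟩
    rintro ⟨v, hv, h⟩
    exact hQd d hdD v hv h
  choose! t ht htT hto using htan
  choose! s e f hsD hsQ hpol hcount using fun u (hu : u ∈ T) =>
    exists_polar_directions hQ hT hab hac hbc hxU hdU hu (ht u hu) (hto u hu)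
  have hexc : ∀ u ∈ T, ∀ x, x = e u ∨ x = f u → x ∉ insert (t u) ({a, b, c} : Finset F) := by
    intro u hu x hxE hxm
    have h := hcount u hu x
    rw [if_pos hxm, zero_add] at h
    have hpos : 0 < ({e u, f u} : Multiset F).count x := by
      rw [Multiset.count_pos]; simpa using hxE
    rw [← h, Finset.card_pos] at hpos
    obtain ⟨v, hv⟩ := hpos
    simp only [Finset.mem_filter, Finset.mem_erase] at hv
    rcases Finset.mem_insert.mp hxm with rfl | hxm
    · exact hv.1.1 (htT u hu v hv.1.2 hv.2)
    · exact hv.1.1 (hd x hxm hv.1.2 hu hv.2)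
  have hslope : ∀ u ∈ T, ∀ x, Q.2 - x * Q.1 = u.2 - x * u.1 → x = s u := by
    intro u hu x h
    have h1 : (x - s u) * (u.1 - Q.1) = 0 := by linear_combination h - hsQ u hu
    rcases mul_eq_zero.mp h1 with h2 | h2
    · exact sub_eq_zero.mp h2
    · exact absurd (sub_eq_zero.mp h2) (hQx u hu)
  refine ⟨Q, hQ, ?_⟩
  by_cases h4 : (4 : F) = 0
  · exfalso
    have hst : ∀ u ∈ T, s u = t u := by
      intro u hu
      have h := hpol u hu (t u)
      rw [h4, zero_mul, sub_self, mul_zero, sub_zero, mul_eq_zero, mul_eq_zero] at h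
      rcases h with (h | h) | h
      · exact (sub_eq_zero.mp h).symm
      · exact absurd (Finset.mem_insert_self _ _) (hexc u hu _ (Or.inl (sub_eq_zero.mp h)))
      · exact absurd (Finset.mem_insert_self _ _) (hexc u hu _ (Or.inr (sub_eq_zero.mp h)))
    have hle : T.card ≤ (({a, b, c} : Finset F)ᶜ).card := by
      refine Finset.card_le_card_of_injOn s (fun u hu => ?_) ?_
      · rw [Finset.coe_compl, Set.mem_compl_iff, Finset.mem_coe]; exact hsD u hu
      intro u hu v hv huv
      refine (htT u hu v hv ?_).symm
      rw [← hst u hu, ← hsQ u hu, huv, hsQ v hv]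
    rw [Finset.card_compl, hDcard] at hle
    omega
  have hroot : ∀ u ∈ T, ∀ x, x = e u ∨ x = f u → (x - s u) * (x - e u) * (x - f u) = 0 := by
    rintro u - x (rfl | rfl) <;> simp
  have hsame : ∀ u ∈ T, ∀ v ∈ T, ∀ x, (x = e u ∨ x = f u) → (x = e v ∨ x = f v) →
      s v = s u ∨ s v = e u ∨ s v = f u := by
    intro u hu v hv x hxu hxv
    have hxD := hexc u hu x hxu
    have h1 := hroot u hu x hxu
    have h2 := hroot v hv x hxv
    rw [hpol u hu] at h1
    rw [hpol v hv] at h2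
    have htt : t u = t v := by
      have h3 : ((x - a) * (x - b) + (x - a) * (x - c) + (x - b) * (x - c)) * (t u - t v) = 0 := by
        linear_combination h1 - h2
      rcases mul_eq_zero.mp h3 with h5 | h5
      · exfalso
        rw [h5, zero_mul, sub_zero] at h1
        simp only [mul_eq_zero, h4, sub_eq_zero, false_or] at h1
        apply hxD
        simp only [Finset.mem_insert, Finset.mem_singleton]
        tauto
      · exact sub_eq_zero.mp h5
    have h6 := hpol u hu (s v)
    rw [htt, ← hpol v hv, sub_self, zero_mul, zero_mul] at h6
    simp only [mul_eq_zero, sub_eq_zero] at h6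
    tauto
  have hmem : ∀ u ∈ T, ∀ v ∈ T, ∀ w ∈ T, v ≠ u → w ≠ u → v ≠ w → ∀ x,
      v.2 - x * v.1 = u.2 - x * u.1 → w.2 - x * w.1 = u.2 - x * u.1 → x = e u ∨ x = f u := by
    intro u hu v hv w hw hvu hwu hvw x hvx hwx
    have h := hcount u hu x
    have h2 : 1 < ((T.erase u).filter (fun v => v.2 - x * v.1 = u.2 - x * u.1)).card :=
      Finset.one_lt_card.mpr ⟨v, by simp [hvu, hv, hvx], w, by simp [hwu, hw, hwx], hvw⟩
    have hpos : 0 < ({e u, f u} : Multiset F).count x := by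
      split_ifs at h <;> omega
    simpa using Multiset.count_pos.mp hpos
  have hall : ∀ u ∈ T, ∀ x, x = e u ∨ x = f u → x = s u := by
    intro u hu x hxE
    by_contra hxs
    have h := hcount u hu x
    rw [if_neg (hexc u hu x hxE)] at h
    have hpos : 0 < ({e u, f u} : Multiset F).count x := by
      rw [Multiset.count_pos]; simpa using hxE
    obtain ⟨v, hv, w, hw, hvw⟩ := Finset.one_lt_card.mp (by omega :
      1 < ((T.erase u).filter (fun v => v.2 - x * v.1 = u.2 - x * u.1)).card)
    simp only [Finset.mem_filter, Finset.mem_erase] at hv hw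
    obtain ⟨⟨hvu, hvT⟩, hvx⟩ := hv
    obtain ⟨⟨hwu, hwT⟩, hwx⟩ := hw
    have hv' := hsame u hu v hvT x hxE (hmem v hvT u hu w hwT hvu.symm hvw.symm hwu.symm x hvx.symm
      (hwx.trans hvx.symm))
    have hw' := hsame u hu w hwT x hxE (hmem w hwT u hu v hvT hwu.symm hvw hvu.symm x hwx.symm
      (hvx.trans hwx.symm))
    have hne : ∀ v ∈ T, v.2 - x * v.1 = u.2 - x * u.1 → s v ≠ x := by
      intro v hv hvx hsv
      have h := hsQ v hv
      rw [hsv, hvx] at h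
      exact hxs (hslope u hu x h)
    have hdist : ∀ v ∈ T, ∀ w ∈ T, v ≠ w → v.2 - x * v.1 = u.2 - x * u.1 →
        w.2 - x * w.1 = u.2 - x * u.1 → s v ≠ s w := by
      intro v hv w hw hvw hvx hwx hs
      have h1 := hsQ v hv
      have h2 := hsQ w hw
      rw [← hs] at h2
      have h3 : (x - s v) * (v.1 - w.1) = 0 := by linear_combination h2 - h1 - hvx + hwx
      rcases mul_eq_zero.mp h3 with h5 | h5
      · exact hne v hv hvx (sub_eq_zero.mp h5).symm
      · exact hvw (hx hv hw (sub_eq_zero.mp h5))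
    have d1 := hdist v hvT u hu hvu hvx rfl
    have d2 := hdist w hwT u hu hwu hwx rfl
    have d3 := hdist v hvT w hwT hvw hvx hwx
    have n1 := hne v hvT hvx
    have n2 := hne w hwT hwx
    rcases hxE with rfl | rfl <;> grind
  intro u hu
  refine ⟨s u, hsQ u hu, ?_⟩
  have he := hall u hu _ (Or.inl rfl)
  have hf := hall u hu _ (Or.inr rfl)
  have h := hcount u hu (s u)
  rw [if_neg (hexc u hu _ (Or.inl he.symm)), he, hf] at h
  simp only [Multiset.insert_eq_cons, Multiset.count_cons_self, Multiset.count_singleton_self] at h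
  rw [Finset.filter_erase, Finset.card_erase_of_mem (by simp [hu])] at h
  omega
section ProjectivePlane

variable {F : Type*} [Field F]

lemma pgMem_mk {v : Fin 3 → F} (hv : v ≠ 0) {L : PGLine F} :
    pgMem (Projectivization.mk F v hv) L ↔ v ∈ L.val := by
  rw [pgMem, Projectivization.submodule_mk, Submodule.span_singleton_le_iff_mem]

lemma pgMem_iff_rep_mem {P : PGPoint F} {L : PGLine F} : pgMem P L ↔ P.rep ∈ L.val := by
  rw [pgMem, Projectivization.submodule_eq, Submodule.span_singleton_le_iff_mem]

lemma finrank_sup_submodule {P Q : PGPoint F} (h : P ≠ Q) :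
    Module.finrank F ↥(P.submodule ⊔ Q.submodule) = 2 := by
  have hli := Projectivization.linearIndependent_pair_iff_ne.mpr h
  rw [P.submodule_eq, Q.submodule_eq, ← Submodule.span_union, Set.singleton_union]
  have := finrank_span_eq_card hli
  rwa [Matrix.range_cons_cons_empty, Fintype.card_fin] at this

/-- The line joining two distinct points. -/
def pgJoin {P Q : PGPoint F} (h : P ≠ Q) : PGLine F :=
  ⟨P.submodule ⊔ Q.submodule, finrank_sup_submodule h⟩

lemma eq_pgJoin {P Q : PGPoint F} (h : P ≠ Q) {L : PGLine F} (hP : pgMem P L) (hQ : pgMem Q L) :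
    L = pgJoin h := by
  refine Subtype.ext (Submodule.eq_of_le_of_finrank_eq (sup_le hP hQ) ?_).symm
  rw [finrank_sup_submodule h, L.2]

lemma pgLine_eq_of_pgMem {P Q : PGPoint F} (h : P ≠ Q) {L M : PGLine F} (hPL : pgMem P L)
    (hQL : pgMem Q L) (hPM : pgMem P M) (hQM : pgMem Q M) : L = M :=
  (eq_pgJoin h hPL hQL).trans (eq_pgJoin h hPM hQM).symm

lemma finrank_inf_pgLine {L M : PGLine F} (h : L ≠ M) :
    Module.finrank F ↥(L.val ⊓ M.val) = 1 := by
  have h1 := Submodule.finrank_sup_add_finrank_inf_eq L.val M.val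
  have h2 : Module.finrank F ↥(L.val ⊔ M.val) ≤ 3 := by
    simpa using Submodule.finrank_le (L.val ⊔ M.val)
  have h3 : L.val < L.val ⊔ M.val := by
    refine lt_of_le_of_ne le_sup_left fun h' => h (Subtype.ext ?_)
    refine (Submodule.eq_of_le_of_finrank_eq (sup_eq_left.mp h'.symm) ?_).symm
    rw [L.2, M.2]
  have h4 := Submodule.finrank_lt_finrank_of_lt h3
  have := L.2
  have := M.2
  omega

/-- The common point of two distinct lines. -/
noncomputable def pgMeet {L M : PGLine F} (h : L ≠ M) : PGPoint F :=
  Projectivization.mk'' (L.val ⊓ M.val) (finrank_inf_pgLine h)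

lemma pgMem_pgMeet {L M : PGLine F} (h : L ≠ M) :
    pgMem (pgMeet h) L ∧ pgMem (pgMeet h) M := by
  simp only [pgMem, pgMeet, Projectivization.submodule_mk'']
  exact ⟨inf_le_left, inf_le_right⟩

lemma pgMem_pgJoin {P Q : PGPoint F} (h : P ≠ Q) :
    pgMem P (pgJoin h) ∧ pgMem Q (pgJoin h) :=
  ⟨le_sup_left, le_sup_right⟩

/-- The line with equation `φ = 0`. -/
def pgLineOfDual (φ : Module.Dual F (Fin 3 → F)) (hφ : φ ≠ 0) : PGLine F :=
  ⟨LinearMap.ker φ, by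
    have h := φ.finrank_range_add_finrank_ker
    rw [LinearMap.range_eq_top.mpr (LinearMap.surjective hφ)] at h
    simp at h
    omega⟩

lemma pgMem_pgLineOfDual {φ : Module.Dual F (Fin 3 → F)} (hφ : φ ≠ 0) {v : Fin 3 → F}
    (hv : v ≠ 0) : pgMem (Projectivization.mk F v hv) (pgLineOfDual φ hφ) ↔ φ v = 0 := by
  rw [pgMem_mk, pgLineOfDual, LinearMap.mem_ker]

lemma exists_not_pgMem (L : PGLine F) : ∃ P : PGPoint F, ¬ pgMem P L := by
  by_contra! h
  have h1 : L.val = ⊤ := by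
    rw [eq_top_iff]
    intro v _
    rcases eq_or_ne v 0 with rfl | hv
    · exact zero_mem _
    · exact (pgMem_mk hv).mp (h _)
  have h2 := L.2
  rw [h1] at h2
  simp at h2

instance : Membership (PGPoint F) (PGLine F) := ⟨fun L P => pgMem P L⟩

noncomputable instance : Configuration.ProjectivePlane (PGPoint F) (PGLine F) where
  exists_point := exists_not_pgMem
  exists_line P := by
    obtain ⟨i, hi⟩ : ∃ i, P.rep i ≠ 0 := by
      by_contra! h
      exact P.rep_nonzero (funext h)
    have hφ : (LinearMap.proj i : Module.Dual F (Fin 3 → F)) ≠ 0 := fun h =>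
      hi (LinearMap.congr_fun h P.rep)
    refine ⟨pgLineOfDual _ hφ, fun h => hi ?_⟩
    have h' := pgMem_iff_rep_mem.mp h
    exact h'
  eq_or_eq {P Q L M} hPL hQL hPM hQM :=
    or_iff_not_imp_left.mpr fun h => pgLine_eq_of_pgMem h hPL hQL hPM hQM
  mkPoint h := pgMeet h
  mkPoint_ax h := pgMem_pgMeet h
  mkLine h := pgJoin h
  mkLine_ax h := pgMem_pgJoin h
  exists_config := by
    have hφ : ∀ i : Fin 3, (LinearMap.proj i : Module.Dual F (Fin 3 → F)) ≠ 0 := fun i h => by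
      simpa using LinearMap.congr_fun h (Pi.single i 1)
    have hv : ∀ i : Fin 3, (Pi.single i 1 : Fin 3 → F) ≠ 0 := fun i => by simp
    have hw : (![1, 1, 0] : Fin 3 → F) ≠ 0 := fun h => by simpa using congr_fun h 0
    have hw' : (![0, 1, 1] : Fin 3 → F) ≠ 0 := fun h => by simpa using congr_fun h 1
    have key : ∀ i {v : Fin 3 → F} (hv : v ≠ 0),
        Projectivization.mk F v hv ∈ pgLineOfDual _ (hφ i) ↔ v i = 0 := fun i v hv =>
      pgMem_pgLineOfDual (hφ i) hv
    refine ⟨.mk F ![1, 1, 0] hw, .mk F _ (hv 2), .mk F ![0, 1, 1] hw',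
      pgLineOfDual _ (hφ 2), pgLineOfDual _ (hφ 0), pgLineOfDual _ (hφ 1), ?_⟩
    simp only [key]
    simp

variable [Fintype F]

lemma order_pgPlane :
    Configuration.ProjectivePlane.order (PGPoint F) (PGLine F) = Fintype.card F := by
  have : Fintype (PGPoint F) := Fintype.ofFinite _
  have h1 := Configuration.ProjectivePlane.card_points (PGPoint F) (PGLine F)
  have h2 := Projectivization.card_of_finrank F (Fin 3 → F) (n := 3) (by simp)
  rw [Nat.card_eq_fintype_card, h1] at h2
  simp only [Finset.sum_range_succ, Finset.sum_range_zero, Nat.card_eq_fintype_card] at h2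
  nlinarith [Nat.zero_le (Fintype.card F),
    Nat.zero_le (Configuration.ProjectivePlane.order (PGPoint F) (PGLine F))]

lemma ncard_pgMem_line (L : PGLine F) : {P : PGPoint F | pgMem P L}.ncard = Fintype.card F + 1 := by
  have := Configuration.ProjectivePlane.pointCount_eq (PGPoint F) L
  rw [order_pgPlane] at this
  rw [← this, Configuration.pointCount, ← Nat.card_coe_set_eq]
  rfl

lemma ncard_pgMem_point (P : PGPoint F) :
    {L : PGLine F | pgMem P L}.ncard = Fintype.card F + 1 := by
  have := Configuration.ProjectivePlane.lineCount_eq (PGLine F) P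
  rw [order_pgPlane] at this
  rw [← this, Configuration.lineCount, ← Nat.card_coe_set_eq]
  rfl

end ProjectivePlane

section Semioval

variable {F : Type*} [Field F] [Fintype F] {S : Set (PGPoint F)}

lemma nsec_pos {P : PGPoint F} {L : PGLine F} (hP : P ∈ S) (hPL : pgMem P L) : 0 < nsec S L :=
  (Set.ncard_pos (Set.toFinite _)).mpr ⟨P, hP, hPL⟩

lemma exists_mem_of_nsec_pos {L : PGLine F} (h : 0 < nsec S L) : ∃ P ∈ S, pgMem P L :=
  (Set.ncard_pos (Set.toFinite _)).mp h

open scoped Classical in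
lemma nsec_eq_card_filter (L : PGLine F) :
    nsec S L = ((Set.toFinite S).toFinset.filter (pgMem · L)).card := by
  rw [nsec, Set.ncard_eq_toFinset_card _ (Set.toFinite _)]
  congr 1
  ext
  simp

/-- The lines through a point of a set are counted by the remaining points. -/
lemma sum_nsec_sub_one {P : PGPoint F} (hP : P ∈ S) :
    ∑ L ∈ (Set.toFinite {L : PGLine F | pgMem P L}).toFinset, (nsec S L - 1) = S.ncard - 1 := by
  classical
  have h := Finset.sum_card_bipartiteAbove_eq_sum_card_bipartiteBelow
    (s := (Set.toFinite S).toFinset.erase P)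
    (t := (Set.toFinite {L : PGLine F | pgMem P L}).toFinset) (fun R L => pgMem R L)
  rw [Set.ncard_eq_toFinset_card S (Set.toFinite _),
    ← Finset.card_erase_of_mem ((Set.Finite.mem_toFinset _).mpr hP), Finset.card_eq_sum_ones]
  refine Eq.trans (Finset.sum_congr rfl fun L hL => ?_) (h.symm.trans
    (Finset.sum_congr rfl fun R hR => ?_))
  · have hL' : pgMem P L := by simpa using hL
    rw [Finset.bipartiteBelow, Finset.filter_erase, Finset.card_erase_of_mem (by simp [hP, hL']),
      nsec_eq_card_filter]
  · have hRP : P ≠ R := by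
      rintro rfl
      simp at hR
    rw [Finset.card_eq_one]
    refine ⟨pgJoin hRP, ?_⟩
    ext L
    simp only [Finset.mem_bipartiteAbove, Set.Finite.mem_toFinset, Set.mem_ofPred_eq,
      Finset.mem_singleton]
    constructor
    · rintro ⟨h1, h2⟩
      exact eq_pgJoin hRP h1 h2
    · rintro rfl
      exact pgMem_pgJoin hRP

/-- In a semioval of size `q + 3`, the non-tangent lines through a point have total excess two. -/
lemma exists_sum_nsec_sub_two (hS : isSemioval S) (hsize : S.ncard = Fintype.card F + 3)
    {P : PGPoint F} (hP : P ∈ S) :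
    ∃ N : Finset (PGLine F), (∀ L, L ∈ N ↔ pgMem P L ∧ 2 ≤ nsec S L) ∧
      ∑ L ∈ N, (nsec S L - 2) = 2 := by
  classical
  obtain ⟨t, ⟨htP, ht⟩, huniq⟩ := hS P hP
  set A := (Set.toFinite {L : PGLine F | pgMem P L}).toFinset with hA
  have htA : t ∈ A := by simpa [hA] using htP
  have hcard : A.card = Fintype.card F + 1 := by
    rw [← ncard_pgMem_point P, Set.ncard_eq_toFinset_card _ (Set.toFinite _)]
  have hmem : ∀ L, L ∈ A.erase t ↔ pgMem P L ∧ 2 ≤ nsec S L := by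
    intro L
    simp only [hA, Finset.mem_erase, Set.Finite.mem_toFinset, Set.mem_ofPred_eq]
    constructor
    · rintro ⟨h1, h2⟩
      refine ⟨h2, ?_⟩
      have h3 := nsec_pos hP h2
      have h4 : nsec S L ≠ 1 := fun h => h1 (huniq L ⟨h2, h⟩)
      omega
    · rintro ⟨h1, h2⟩
      refine ⟨?_, h1⟩
      rintro rfl
      omega
  refine ⟨A.erase t, hmem, ?_⟩
  have h1 := sum_nsec_sub_one hP
  rw [← hA, ← Finset.add_sum_erase _ _ htA, ht, Nat.sub_self, zero_add, hsize] at h1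
  have h2 : ∑ L ∈ A.erase t, (nsec S L - 1) = ∑ L ∈ A.erase t, ((nsec S L - 2) + 1) := by
    refine Finset.sum_congr rfl fun L hL => ?_
    have := ((hmem L).mp hL).2
    omega
  rw [h2, Finset.sum_add_distrib, Finset.sum_const, smul_eq_mul, mul_one,
    Finset.card_erase_of_mem htA, hcard] at h1
  omega

lemma nsec_le_four (hS : isSemioval S) (hsize : S.ncard = Fintype.card F + 3) (L : PGLine F) :
    nsec S L ≤ 4 := by
  by_contra! h
  obtain ⟨P, hP, hPL⟩ := exists_mem_of_nsec_pos (by omega : 0 < nsec S L)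
  obtain ⟨N, hN, hsum⟩ := exists_sum_nsec_sub_two hS hsize hP
  have := Finset.single_le_sum (f := fun L => nsec S L - 2) (fun _ _ => Nat.zero_le _)
    ((hN L).mpr ⟨hPL, by omega⟩)
  omega

lemma nsec_le_two_of_ne (hS : isSemioval S) (hsize : S.ncard = Fintype.card F + 3)
    {P : PGPoint F} (hP : P ∈ S) {L M : PGLine F} (hPL : pgMem P L) (hL : nsec S L = 4)
    (hPM : pgMem P M) (hLM : M ≠ L) : nsec S M ≤ 2 := by
  classical
  by_contra! h
  obtain ⟨N, hN, hsum⟩ := exists_sum_nsec_sub_two hS hsize hP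
  have h1 := Finset.sum_le_sum_of_subset (f := fun L => nsec S L - 2)
    (s := {M, L}) (t := N) (by
      intro K hK
      rcases Finset.mem_insert.mp hK with rfl | hK
      · exact (hN _).mpr ⟨hPM, by omega⟩
      · rw [Finset.mem_singleton.mp hK]
        exact (hN _).mpr ⟨hPL, by omega⟩)
  rw [Finset.sum_pair hLM] at h1
  omega

/-- If all lines meet the semioval in at most three points, then `3 ∣ q`. -/
lemma three_dvd_card (hS : isSemioval S) (hsize : S.ncard = Fintype.card F + 3)
    (h4 : ∀ L, nsec S L ≠ 4) : 3 ∣ Fintype.card F := by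
  classical
  have : Fintype (PGLine F) := Fintype.ofFinite _
  have h := Finset.sum_card_bipartiteAbove_eq_sum_card_bipartiteBelow
    (s := (Set.toFinite S).toFinset)
    (t := Finset.univ.filter fun L : PGLine F => nsec S L = 3) (fun R L => pgMem R L)
  have h1 : ∀ P ∈ (Set.toFinite S).toFinset, (Finset.bipartiteAbove (fun R L => pgMem R L)
      (Finset.univ.filter fun L : PGLine F => nsec S L = 3) P).card = 2 := by
    intro P hP
    obtain ⟨N, hN, hsum⟩ := exists_sum_nsec_sub_two hS hsize (by simpa using hP : P ∈ S)
    rw [← hsum, Finset.bipartiteAbove, Finset.filter_filter]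
    have h2 : ∀ L ∈ N, nsec S L - 2 = if nsec S L = 3 then 1 else 0 := by
      intro L hL
      have h3 := nsec_le_four hS hsize L
      have h5 := h4 L
      have h6 := ((hN L).mp hL).2
      split_ifs <;> omega
    rw [Finset.sum_congr rfl h2, Finset.sum_boole, Nat.cast_id]
    congr 1
    ext L
    simp only [Finset.mem_filter, Finset.mem_univ, true_and, hN]
    constructor
    · rintro ⟨h1, h2⟩
      exact ⟨⟨h2, by omega⟩, h1⟩
    · rintro ⟨⟨h1, -⟩, h2⟩
      exact ⟨h2, h1⟩
  have h2 : ∀ L ∈ (Finset.univ.filter fun L : PGLine F => nsec S L = 3),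
      (Finset.bipartiteBelow (fun R L => pgMem R L) (Set.toFinite S).toFinset L).card = 3 := by
    intro L hL
    refine Eq.trans ?_ (Finset.mem_filter.mp hL).2
    rw [nsec_eq_card_filter]
    rfl
  rw [Finset.sum_congr rfl h1, Finset.sum_congr rfl h2, Finset.sum_const, Finset.sum_const,
    ← Set.ncard_eq_toFinset_card, hsize, smul_eq_mul, smul_eq_mul] at h
  omega

end Semioval

section Coordinates

variable {F : Type*} [Field F]

/-- Three points which are not collinear have linearly independent representatives. -/
lemma linearIndependent_of_not_pgMem {P Q R : PGPoint F} {L : PGLine F} (hQR : Q ≠ R)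
    (hQ : pgMem Q L) (hR : pgMem R L) (hP : ¬ pgMem P L) :
    LinearIndependent F ![P.rep, Q.rep, R.rep] := by
  refine linearIndependent_finCons.mpr
    ⟨Projectivization.linearIndependent_pair_iff_ne.mpr hQR, fun h => hP ?_⟩
  rw [pgMem_iff_rep_mem]
  refine Submodule.span_le.mpr ?_ h
  rw [Matrix.range_cons_cons_empty]
  rintro v (rfl | rfl)
  · exact pgMem_iff_rep_mem.mp hQ
  · exact pgMem_iff_rep_mem.mp hR

lemma mk_eq_of_coord {ι : Type*} [Finite ι] (b : Module.Basis ι F (Fin 3 → F)) {v w : Fin 3 → F}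
    (hv : v ≠ 0) (hw : w ≠ 0) (a : F) (h : ∀ i, a * b.coord i w = b.coord i v) :
    Projectivization.mk F v hv = Projectivization.mk F w hw := by
  rw [Projectivization.mk_eq_mk_iff']
  exact ⟨a, b.ext_elem fun i => by simpa using h i⟩

/-- Affine coordinates in the complement of a line `L`, with the point `P` of `L` as the common
point of the vertical lines. -/
lemma exists_affine_coordinates {L : PGLine F} {P : PGPoint F} (hP : pgMem P L) :
    ∃ (aff : F × F → PGPoint F) (dir : F → PGPoint F) (line : F → F → PGLine F)
      (vert : F → PGLine F),
      aff.Injective ∧ (∀ u, ¬ pgMem (aff u) L) ∧ (∀ R, ¬ pgMem R L → ∃ u, aff u = R) ∧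
      dir.Injective ∧ (∀ d, pgMem (dir d) L ∧ dir d ≠ P) ∧
      (∀ R, pgMem R L → R ≠ P → ∃ d, dir d = R) ∧
      (∀ u d c, pgMem (aff u) (line d c) ↔ u.2 - d * u.1 = c) ∧
      (∀ e d c, pgMem (dir e) (line d c) ↔ e = d) ∧ (∀ d c, ¬ pgMem P (line d c)) ∧
      (∀ u c, pgMem (aff u) (vert c) ↔ u.1 = c) ∧ ∀ c, pgMem P (vert c) := by
  obtain ⟨P₀, hP₀⟩ := exists_not_pgMem L
  obtain ⟨M, hM⟩ := Configuration.Nondegenerate.exists_line (L := PGLine F) P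
  have hLM : L ≠ M := fun h => hM (h ▸ hP)
  have hP₁ := pgMem_pgMeet hLM
  set P₁ := pgMeet hLM
  have hP₁P : P₁ ≠ P := fun h => hM (h ▸ hP₁.2)
  have hli := linearIndependent_of_not_pgMem hP₁P hP₁.1 hP hP₀
  set b := basisOfLinearIndependentOfCardEqFinrank hli (by simp) with hb
  have hb0 : b 0 = P₀.rep := by simp [hb]
  have hb1 : b 1 = P₁.rep := by simp [hb]
  have hb2 : b 2 = P.rep := by simp [hb]
  set α : Fin 3 → Module.Dual F (Fin 3 → F) := b.coord with hα
  have hαb : ∀ i j, α i (b j) = if j = i then 1 else 0 := by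
    intro i j
    rw [hα, b.coord_apply, b.repr_self, Finsupp.single_apply]
  have h00 := hαb 0 0
  have h01 := hαb 0 1
  have h02 := hαb 0 2
  have h10 := hαb 1 0
  have h11 := hαb 1 1
  have h12 := hαb 1 2
  have h20 := hαb 2 0
  have h21 := hαb 2 1
  have h22 := hαb 2 2
  simp at h00 h01 h02 h10 h11 h12 h20 h21 h22
  have h0 : α 0 ≠ 0 := fun h => by simp [h] at h00
  have hL₀ : L = pgLineOfDual (α 0) h0 := by
    refine pgLine_eq_of_pgMem hP₁P hP₁.1 hP ?_ ?_
    · rw [← P₁.mk_rep, pgMem_pgLineOfDual, ← hb1, h01]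
    · rw [← P.mk_rep, pgMem_pgLineOfDual, ← hb2, h02]
  have hL : ∀ R : PGPoint F, pgMem R L ↔ α 0 R.rep = 0 := by
    intro R
    rw [hL₀]
    conv_lhs => rw [← R.mk_rep]
    rw [pgMem_pgLineOfDual]
  have haff : ∀ u : F × F, b 0 + u.1 • b 1 + u.2 • b 2 ≠ 0 := fun u h => by
    simpa [h00, h01, h02] using congr_arg (α 0) h
  have hdir : ∀ d : F, b 1 + d • b 2 ≠ 0 := fun d h => by
    simpa [h11, h12] using congr_arg (α 1) h
  have hline : ∀ d c : F, α 2 - d • α 1 - c • α 0 ≠ 0 := fun d c h => by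
    simpa [h22, h12, h02] using LinearMap.congr_fun h (b 2)
  have hvert : ∀ c : F, α 1 - c • α 0 ≠ 0 := fun c h => by
    simpa [h11, h01] using LinearMap.congr_fun h (b 1)
  have hPmk : ∀ {φ : Module.Dual F (Fin 3 → F)} (hφ : φ ≠ 0),
      pgMem P (pgLineOfDual φ hφ) ↔ φ (b 2) = 0 := fun hφ => by
    rw [hb2]
    conv_lhs => rw [← P.mk_rep]
    rw [pgMem_pgLineOfDual]
  refine ⟨fun u => .mk F _ (haff u), fun d => .mk F _ (hdir d), fun d c => pgLineOfDual _ (hline d c),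
    fun c => pgLineOfDual _ (hvert c), ?_, ?_, ?_, ?_, ?_, ?_, ?_, ?_, ?_, ?_, ?_⟩
  · intro u v h
    obtain ⟨a, ha⟩ := (Projectivization.mk_eq_mk_iff' ..).mp h
    have e0 := congr_arg (α 0) ha
    have e1 := congr_arg (α 1) ha
    have e2 := congr_arg (α 2) ha
    simp [h00, h01, h02, h10, h11, h12, h20, h21, h22] at e0 e1 e2
    subst e0
    exact Prod.ext (by simpa using e1.symm) (by simpa using e2.symm)
  · intro u
    rw [hL₀, pgMem_pgLineOfDual]
    simp [h00, h01, h02]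
  · intro R hR
    rw [hL] at hR
    refine ⟨(α 1 R.rep / α 0 R.rep, α 2 R.rep / α 0 R.rep), ?_⟩
    conv_rhs => rw [← R.mk_rep]
    refine mk_eq_of_coord b _ _ (α 0 R.rep)⁻¹ fun i => ?_
    change _ * α i _ = α i _
    fin_cases i <;> simp [h00, h01, h02, h10, h11, h12, h20, h21, h22] <;> field_simp
  · intro u v h
    obtain ⟨a, ha⟩ := (Projectivization.mk_eq_mk_iff' ..).mp h
    have e1 := congr_arg (α 1) ha
    have e2 := congr_arg (α 2) ha
    simp [h11, h12, h21, h22] at e1 e2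
    subst e1
    simpa using e2.symm
  · intro d
    rw [hL₀, pgMem_pgLineOfDual]
    refine ⟨by simp [h01, h02], fun h => ?_⟩
    have h1 := (hPmk (hvert 0)).mpr (by simp [h12])
    rw [← h, pgMem_pgLineOfDual] at h1
    simp [h11, h12] at h1
  · intro R hR hRP
    rw [hL] at hR
    have h1 : α 1 R.rep ≠ 0 := by
      intro h1
      apply hRP
      conv_lhs => rw [← R.mk_rep]
      conv_rhs => rw [← P.mk_rep]
      refine mk_eq_of_coord b _ _ (α 2 R.rep) fun i => ?_
      change _ * α i _ = α i _
      rw [← hb2]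
      fin_cases i <;> simp [h02, h12, h22, hR, h1]
    refine ⟨α 2 R.rep / α 1 R.rep, ?_⟩
    conv_rhs => rw [← R.mk_rep]
    refine mk_eq_of_coord b _ _ (α 1 R.rep)⁻¹ fun i => ?_
    change _ * α i _ = α i _
    fin_cases i <;> simp [h01, h02, h11, h12, h21, h22, hR, h1]
    field_simp
  · intro u d c
    rw [pgMem_pgLineOfDual]
    simp [h00, h01, h02, h10, h11, h12, h20, h21, h22, sub_eq_zero]
  · intro e d c
    rw [pgMem_pgLineOfDual]
    simp [h01, h02, h11, h12, h21, h22, sub_eq_zero]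
  · intro d c
    rw [hPmk]
    simp [h02, h12, h22]
  · intro u c
    rw [pgMem_pgLineOfDual]
    simp [h00, h01, h02, h10, h11, h12, sub_eq_zero]
  · intro c
    rw [hPmk]
    simp [h02, h12]

end Coordinates

section FourSecant

variable {F : Type*} [Field F] {S : Set (PGPoint F)}

lemma eq_of_nsec_eq_one {P Q : PGPoint F} {L : PGLine F} (h : nsec S L = 1) (hP : P ∈ S)
    (hQ : Q ∈ S) (hPL : pgMem P L) (hQL : pgMem Q L) : P = Q := by
  obtain ⟨X, hX⟩ := Set.ncard_eq_one.mp h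
  have h1 : P ∈ ({X} : Set _) := hX ▸ ⟨hP, hPL⟩
  have h2 : Q ∈ ({X} : Set _) := hX ▸ ⟨hQ, hQL⟩
  exact h1.trans h2.symm

variable [Fintype F]

lemma three_le_nsec {P Q R : PGPoint F} {L : PGLine F} (hP : P ∈ S) (hQ : Q ∈ S) (hR : R ∈ S)
    (hPL : pgMem P L) (hQL : pgMem Q L) (hRL : pgMem R L) (hPQ : P ≠ Q) (hPR : P ≠ R)
    (hQR : Q ≠ R) : 3 ≤ nsec S L := by
  rw [← Set.ncard_eq_three.mpr ⟨P, Q, R, hPQ, hPR, hQR, rfl⟩]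
  refine Set.ncard_le_ncard ?_ (Set.toFinite _)
  rintro X (rfl | rfl | rfl)
  exacts [⟨hP, hPL⟩, ⟨hQ, hQL⟩, ⟨hR, hRL⟩]

/-- The points of the semioval off a four-secant are on four-secants through a common point. -/
theorem exists_center_of_four_secant (hS : isSemioval S) (hsize : S.ncard = Fintype.card F + 3)
    {L : PGLine F} (hL : nsec S L = 4) :
    ∃ Q : PGPoint F, ¬ pgMem Q L ∧ Q ∉ S ∧
      ∀ R ∈ S, ¬ pgMem R L → ∃ M, pgMem R M ∧ pgMem Q M ∧ nsec S M = 4 := by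
  classical
  obtain ⟨P, hP, hPL⟩ := exists_mem_of_nsec_pos (by omega : 0 < nsec S L)
  obtain ⟨aff, dir, line, vert, haff, haffL, haff_surj, hdir, hdirL, hdir_surj, haff_line,
    hdir_line, hP_line, haff_vert, hP_vert⟩ := exists_affine_coordinates hPL
  have hline_ne : ∀ d c, line d c ≠ L := fun d c h => hP_line d c (h ▸ hPL)
  have hvert_ne : ∀ c, vert c ≠ L := fun c h => haffL (c, 0) (h ▸ (haff_vert _ _).mpr rfl)
  set T : Finset (F × F) := Finset.univ.filter fun u => aff u ∈ S with hTdef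
  set D : Finset F := Finset.univ.filter fun d => dir d ∈ S with hDdef
  have hTS : ∀ {u}, u ∈ T ↔ aff u ∈ S := by simp [hTdef]
  have hDS : ∀ {d}, d ∈ D ↔ dir d ∈ S := by simp [hDdef]
  have hTcard : T.card + 1 = Fintype.card F := by
    have h1 := Set.ncard_inter_add_ncard_sdiff_eq_ncard S {R | pgMem R L} (Set.toFinite _)
    have h2 : S \ {R | pgMem R L} = aff '' T := by
      ext R
      constructor
      · rintro ⟨h1, h2⟩
        obtain ⟨u, rfl⟩ := haff_surj R h2
        exact ⟨u, hTS.mpr h1, rfl⟩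
      · rintro ⟨u, hu, rfl⟩
        exact ⟨hTS.mp hu, haffL u⟩
    rw [h2, Set.ncard_image_of_injective _ haff, Set.ncard_coe_finset, hsize] at h1
    have h3 : (S ∩ {R | pgMem R L}).ncard = 4 := hL
    omega
  have hDcard : D.card = 3 := by
    have h2 : {R ∈ S | pgMem R L} \ {P} = dir '' D := by
      ext R
      constructor
      · rintro ⟨⟨h1, h2⟩, h3⟩
        obtain ⟨d, rfl⟩ := hdir_surj R h2 h3
        exact ⟨d, hDS.mpr h1, rfl⟩
      · rintro ⟨d, hd, rfl⟩
        exact ⟨⟨hDS.mp hd, (hdirL d).1⟩, (hdirL d).2⟩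
    have h1 := Set.ncard_sdiff_singleton_add_one (s := {R ∈ S | pgMem R L}) (a := P) ⟨hP, hPL⟩
      (Set.toFinite _)
    rw [h2, Set.ncard_image_of_injective _ hdir, Set.ncard_coe_finset] at h1
    have h3 : {R ∈ S | pgMem R L}.ncard = 4 := hL
    omega
  obtain ⟨a, b, c, hab, hac, hbc, hD⟩ := Finset.card_eq_three.mp hDcard
  have hx : Set.InjOn (Prod.fst : F × F → F) T := by
    intro u hu v hv huv
    by_contra hne
    have h1 := three_le_nsec (L := vert v.1) hP (hTS.mp hu) (hTS.mp hv) (hP_vert _)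
      ((haff_vert _ _).mpr huv) ((haff_vert _ _).mpr rfl) (fun h => haffL u (h ▸ hPL))
      (fun h => haffL v (h ▸ hPL)) (haff.ne hne)
    have h2 := nsec_le_two_of_ne hS hsize hP hPL hL (hP_vert v.1) (hvert_ne _)
    omega
  have hd : ∀ d ∈ ({a, b, c} : Finset F), Set.InjOn (fun v : F × F => v.2 - d * v.1) T := by
    intro d hd u hu v hv huv
    rw [← hD, hDS] at hd
    by_contra hne
    have hmem := (hdir_line d d (v.2 - d * v.1)).mpr rfl
    have h1 := three_le_nsec hd (hTS.mp hu) (hTS.mp hv) hmem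
      ((haff_line _ _ _).mpr huv) ((haff_line _ _ _).mpr rfl) (fun h => haffL u (h ▸ (hdirL d).1))
      (fun h => haffL v (h ▸ (hdirL d).1)) (haff.ne hne)
    have h2 := nsec_le_two_of_ne hS hsize hd (hdirL d).1 hL hmem (hline_ne _ _)
    omega
  obtain ⟨Q, hQT, hQ⟩ := exists_center_of_affine_tangents hTcard hab hac hbc hx hd (by
    intro u hu
    rw [← hD]
    obtain ⟨t, ⟨htu, ht⟩, huniq⟩ := hS (aff u) (hTS.mp hu)
    have htL : t ≠ L := by
      rintro rfl
      omega
    obtain ⟨hXt, hXL⟩ := pgMem_pgMeet htL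
    set X := pgMeet htL
    have hXu : X ≠ aff u := fun h => haffL u (h ▸ hXL)
    have hXS : X ∉ S := fun h => hXu (eq_of_nsec_eq_one ht h (hTS.mp hu) hXt htu)
    obtain ⟨d, hdX⟩ := hdir_surj X hXL fun h => hXS (h ▸ hP)
    have htd : t = line d (u.2 - d * u.1) :=
      pgLine_eq_of_pgMem hXu hXt htu (hdX ▸ (hdir_line _ _ _).mpr rfl) ((haff_line _ _ _).mpr rfl)
    refine ⟨d, fun h => hXS (hdX ▸ hDS.mp h), ?_, ?_⟩
    · intro v hv hvu
      refine haff (eq_of_nsec_eq_one ht (hTS.mp hv) (hTS.mp hu) ?_ htu)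
      rw [htd]
      exact (haff_line _ _ _).mpr hvu
    · intro e heD hed
      have hue := (haff_line u e (u.2 - e * u.1)).mpr rfl
      have hne : nsec S (line e (u.2 - e * u.1)) ≠ 1 := by
        intro h
        have h1 := huniq _ ⟨hue, h⟩
        rw [htd] at h1
        have h2 := (hdir_line e e (u.2 - e * u.1)).mpr rfl
        rw [h1, hdir_line] at h2
        exact hed h2
      have hpos := nsec_pos (hTS.mp hu) hue
      obtain ⟨R, ⟨hRS, hR⟩, hRu⟩ := Set.exists_ne_of_one_lt_ncard
        (s := {R ∈ S | pgMem R (line e (u.2 - e * u.1))}) (lt_of_le_of_ne hpos hne.symm) (aff u)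
      have hRL : ¬ pgMem R L := by
        intro hRL
        obtain ⟨f, rfl⟩ := hdir_surj R hRL fun h => hP_line _ _ (h ▸ hR)
        rw [hdir_line] at hR
        exact heD (hDS.mpr (hR ▸ hRS))
      obtain ⟨v, rfl⟩ := haff_surj R hRL
      exact ⟨v, hTS.mpr hRS, fun h => hRu (h ▸ rfl), (haff_line _ _ _).mp hR⟩)
  refine ⟨aff Q, haffL Q, fun h => hQT (hTS.mpr h), fun R hR hRL => ?_⟩
  obtain ⟨u, rfl⟩ := haff_surj R hRL
  obtain ⟨s, hs, hcount⟩ := hQ u (hTS.mpr hR)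
  refine ⟨line s (u.2 - s * u.1), (haff_line _ _ _).mpr rfl, (haff_line _ _ _).mpr hs,
    le_antisymm (nsec_le_four hS hsize _) ?_⟩
  rw [← hcount, ← Set.ncard_coe_finset, ← Set.ncard_image_of_injective _ haff]
  refine Set.ncard_le_ncard ?_ (Set.toFinite _)
  rintro _ ⟨v, hv, rfl⟩
  rw [Finset.coe_filter] at hv
  exact ⟨hTS.mp hv.1, (haff_line _ _ _).mpr hv.2⟩

/-- Two four-secants have no common point in the semioval. -/
lemma four_secant_eq (hS : isSemioval S) (hsize : S.ncard = Fintype.card F + 3) {P : PGPoint F}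
    (hP : P ∈ S) {L M : PGLine F} (hL : nsec S L = 4) (hM : nsec S M = 4) (hPL : pgMem P L)
    (hPM : pgMem P M) : M = L := by
  by_contra h
  have := nsec_le_two_of_ne hS hsize hP hPL hL hPM h
  omega

lemma exists_center_of_four_secants (hS : isSemioval S) (hsize : S.ncard = Fintype.card F + 3)
    {L : PGLine F} (hL : nsec S L = 4) :
    ∃ Q : PGPoint F, ¬ pgMem Q L ∧ ∀ M, M ≠ L → nsec S M = 4 → pgMem Q M := by
  obtain ⟨Q, hQL, -, hQ⟩ := exists_center_of_four_secant hS hsize hL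
  refine ⟨Q, hQL, fun M hML hM => ?_⟩
  obtain ⟨R, hR, hRM⟩ := exists_mem_of_nsec_pos (by omega : 0 < nsec S M)
  obtain ⟨M', hRM', hQM', hM'⟩ :=
    hQ R hR fun hRL => hML (four_secant_eq hS hsize hR hL hM hRL hRM)
  rwa [← four_secant_eq hS hsize hR hM hM' hRM hRM']

lemma exists_four_secant_of_mem (hS : isSemioval S) (hsize : S.ncard = Fintype.card F + 3)
    {L : PGLine F} (hL : nsec S L = 4) {P : PGPoint F} (hP : P ∈ S) :
    ∃ M, nsec S M = 4 ∧ pgMem P M := by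
  by_cases hPL : pgMem P L
  · exact ⟨L, hL, hPL⟩
  · obtain ⟨Q, -, -, hQ⟩ := exists_center_of_four_secant hS hsize hL
    obtain ⟨M, hPM, -, hM⟩ := hQ P hP hPL
    exact ⟨M, hM, hPM⟩

lemma four_mul_ncard_four_secants (hS : isSemioval S) (hsize : S.ncard = Fintype.card F + 3)
    {L : PGLine F} (hL : nsec S L = 4) :
    4 * {M : PGLine F | nsec S M = 4}.ncard = Fintype.card F + 3 := by
  classical
  have h := Finset.sum_card_bipartiteAbove_eq_sum_card_bipartiteBelow
    (s := (Set.toFinite S).toFinset)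
    (t := (Set.toFinite {M : PGLine F | nsec S M = 4}).toFinset) (fun R L => pgMem R L)
  have h1 : ∀ P ∈ (Set.toFinite S).toFinset, (Finset.bipartiteAbove (fun R L => pgMem R L)
      (Set.toFinite {M : PGLine F | nsec S M = 4}).toFinset P).card = 1 := by
    intro P hP
    have hPS : P ∈ S := by simpa using hP
    obtain ⟨M, hM, hPM⟩ := exists_four_secant_of_mem hS hsize hL hPS
    rw [Finset.card_eq_one]
    refine ⟨M, ?_⟩
    ext K
    simp only [Finset.mem_bipartiteAbove, Set.Finite.mem_toFinset, Set.mem_ofPred_eq,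
      Finset.mem_singleton]
    constructor
    · rintro ⟨h1, h2⟩
      exact four_secant_eq hS hsize hPS hM h1 hPM h2
    · rintro rfl
      exact ⟨hM, hPM⟩
  have h2 : ∀ M ∈ (Set.toFinite {M : PGLine F | nsec S M = 4}).toFinset,
      (Finset.bipartiteBelow (fun R L => pgMem R L) (Set.toFinite S).toFinset M).card = 4 := by
    intro M hM
    refine Eq.trans ?_ (by simpa using hM : nsec S M = 4)
    rw [nsec_eq_card_filter]
    rfl
  rw [Finset.sum_congr rfl h1, Finset.sum_congr rfl h2, Finset.sum_const, Finset.sum_const,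
    ← Set.ncard_eq_toFinset_card, ← Set.ncard_eq_toFinset_card, hsize, smul_eq_mul,
    smul_eq_mul] at h
  omega

lemma ncard_four_secants_le (hS : isSemioval S) (hsize : S.ncard = Fintype.card F + 3) :
    {M : PGLine F | nsec S M = 4}.ncard ≤ 3 := by
  by_contra! h
  obtain ⟨A, hA, hA4⟩ := Set.exists_subset_card_eq (show 4 ≤ _ from h)
  obtain ⟨K, L, M, N, hKL, hKM, hKN, hLM, hLN, hMN, rfl⟩ := Set.ncard_eq_four.mp hA4
  have hK : nsec S K = 4 := hA (by simp)
  have hL : nsec S L = 4 := hA (by simp)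
  have hM : nsec S M = 4 := hA (by simp)
  have hN : nsec S N = 4 := hA (by simp)
  obtain ⟨P, hPK, hP⟩ := exists_center_of_four_secants hS hsize hK
  obtain ⟨Q, hQL, hQ⟩ := exists_center_of_four_secants hS hsize hL
  have hPQ : P ≠ Q := fun h => hPK (h ▸ hQ K hKL hK)
  exact hMN (pgLine_eq_of_pgMem hPQ (hP M hKM.symm hM) (hQ M hLM.symm hM) (hP N hKN.symm hN)
    (hQ N hLN.symm hN))

/-- Semiovals of size `q + 3` with a four-secant have two or three of them. -/
lemma four_secant_cases (hS : isSemioval S) (hsize : S.ncard = Fintype.card F + 3)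
    {L₀ : PGLine F} (hL₀ : nsec S L₀ = 4) :
    (Fintype.card F = 5 ∧ ∃ L M, L ≠ M ∧ nsec S L = 4 ∧ nsec S M = 4 ∧
      ∀ P ∈ S, pgMem P L ∨ pgMem P M) ∨
    (Fintype.card F = 9 ∧ ∃ L M N, L ≠ M ∧ L ≠ N ∧ M ≠ N ∧
      nsec S L = 4 ∧ nsec S M = 4 ∧ nsec S N = 4 ∧
      ∀ P ∈ S, pgMem P L ∨ pgMem P M ∨ pgMem P N) := by
  have h1 := four_mul_ncard_four_secants hS hsize hL₀
  have h2 := ncard_four_secants_le hS hsize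
  have hF : 1 < Fintype.card F := Fintype.one_lt_card
  have h3 : {M : PGLine F | nsec S M = 4}.ncard = 2 ∨ {M : PGLine F | nsec S M = 4}.ncard = 3 := by
    omega
  have hcov : ∀ P ∈ S, ∃ M ∈ {M : PGLine F | nsec S M = 4}, pgMem P M := fun P hP =>
    exists_four_secant_of_mem hS hsize hL₀ hP
  rcases h3 with h3 | h3
  · refine Or.inl ⟨by omega, ?_⟩
    obtain ⟨L, M, hLM, h⟩ := Set.ncard_eq_two.mp h3
    have hmem : ∀ K ∈ ({L, M} : Set (PGLine F)), nsec S K = 4 := fun K hK => by rwa [← h] at hK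
    rw [h] at hcov
    exact ⟨L, M, hLM, hmem L (by simp), hmem M (by simp), by simpa using hcov⟩
  · refine Or.inr ⟨by omega, ?_⟩
    obtain ⟨L, M, N, hLM, hLN, hMN, h⟩ := Set.ncard_eq_three.mp h3
    have hmem : ∀ K ∈ ({L, M, N} : Set (PGLine F)), nsec S K = 4 := fun K hK => by
      rwa [← h] at hK
    rw [h] at hcov
    exact ⟨L, M, N, hLM, hLN, hMN, hmem L (by simp), hmem M (by simp), hmem N (by simp),
      by simpa using hcov⟩

lemma exists_eq_remaining_point (hF : Fintype.card F = 5) {L : PGLine F} (hL : nsec S L = 4)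
    {X : PGPoint F} (hXL : pgMem X L) (hX : X ∉ S) :
    ∃ P, pgMem P L ∧ P ∉ S ∧ P ≠ X ∧ ∀ R, pgMem R L → R ∉ S → R ≠ X → R = P := by
  have h1 := Set.ncard_inter_add_ncard_sdiff_eq_ncard {R | pgMem R L} S (Set.toFinite _)
  have h2 := Set.ncard_sdiff_singleton_add_one (s := {R | pgMem R L} \ S) (a := X) ⟨hXL, hX⟩
    (Set.toFinite _)
  have h3 : ({R | pgMem R L} ∩ S).ncard = 4 := by
    rw [Set.inter_comm]
    exact hL
  rw [ncard_pgMem_line] at h1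
  obtain ⟨P, hP⟩ := Set.ncard_eq_one.mp (by omega : (({R | pgMem R L} \ S) \ {X}).ncard = 1)
  have hPmem : P ∈ ({R | pgMem R L} \ S) \ {X} := hP ▸ rfl
  refine ⟨P, hPmem.1.1, hPmem.1.2, hPmem.2, fun R h1 h2 h3 => ?_⟩
  have : R ∈ ({R | pgMem R L} \ S) \ {X} := ⟨⟨h1, h2⟩, h3⟩
  rw [hP] at this
  exact this

lemma isSymmDiff_of_two_four_secants (hS : isSemioval S) (hsize : S.ncard = Fintype.card F + 3)
    (hF : Fintype.card F = 5) {L M : PGLine F} (hLM : L ≠ M) (hL : nsec S L = 4)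
    (hM : nsec S M = 4) (hcov : ∀ P ∈ S, pgMem P L ∨ pgMem P M) :
    isSymmDiffOfTwoLinesMinusTwoPoints S L M := by
  obtain ⟨hXL, hXM⟩ := pgMem_pgMeet hLM
  set X := pgMeet hLM
  have hdisj : ∀ P ∈ S, pgMem P L → ¬ pgMem P M := fun P hP h1 h2 =>
    hLM (four_secant_eq hS hsize hP hL hM h1 h2).symm
  have hX : X ∉ S := fun h => hdisj X h hXL hXM
  have hXeq : ∀ R, pgMem R L → pgMem R M → R = X := fun R h1 h2 => by
    by_contra h
    exact hLM (pgLine_eq_of_pgMem h h1 hXL h2 hXM)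
  obtain ⟨P, hPL, hPS, hPX, hP⟩ := exists_eq_remaining_point hF hL hXL hX
  obtain ⟨Q, hQM, hQS, hQX, hQ⟩ := exists_eq_remaining_point hF hM hXM hX
  refine ⟨hLM, P, Q, hPL, fun h => hPX (hXeq P hPL h), hQM, fun h => hQX (hXeq Q h hQM), ?_⟩
  ext R
  simp only [Set.mem_sdiff, Set.mem_union, Set.mem_ofPred_eq, Set.mem_insert_iff,
    Set.mem_singleton_iff, not_or]
  constructor
  · intro hR
    have hRP : R ≠ P := fun h => hPS (h ▸ hR)
    have hRQ : R ≠ Q := fun h => hQS (h ▸ hR)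
    have h1 := hcov R hR
    have h2 := hdisj R hR
    tauto
  · rintro ⟨h1, hRP, hRQ⟩
    by_contra hR
    have hRX : R ≠ X := by
      rintro rfl
      tauto
    rcases h1 with h1 | h1
    · exact hRP (hP R h1.1 hR hRX)
    · exact hRQ (hQ R h1.1 hR hRX)

end FourSecant

section FieldOfNine

variable {F : Type*} [Field F]

lemma mem_iff_pow_four_eq {A : Finset F} (hA : A.card = 4)
    (h : ∀ a ∈ A, ∀ b ∈ A, a ^ 4 = b ^ 4) {a : F} (ha : a ∈ A) (x : F) :
    x ∈ A ↔ x ^ 4 = a ^ 4 := by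
  classical
  have h1 : A = (Polynomial.nthRoots 4 (a ^ 4)).toFinset := by
    refine Finset.eq_of_subset_of_card_le (fun x hx => ?_) ?_
    · rw [Multiset.mem_toFinset, Polynomial.mem_nthRoots (by norm_num)]
      exact h x hx a ha
    · rw [hA]
      exact (Multiset.toFinset_card_le _).trans (Polynomial.card_nthRoots 4 _)
  rw [h1, Multiset.mem_toFinset, Polynomial.mem_nthRoots (by norm_num)]

variable [Fintype F]

lemma ringChar_ne_two_of_card_eq_nine (hF : Fintype.card F = 9) : ringChar F ≠ 2 := by
  intro h
  have := FiniteField.even_card_of_char_two h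
  omega

lemma pow_four_eq_one_or_neg_one (hF : Fintype.card F = 9) {x : F} (hx : x ≠ 0) :
    x ^ 4 = 1 ∨ x ^ 4 = -1 := by
  have := FiniteField.pow_dichotomy (ringChar_ne_two_of_card_eq_nine hF) hx
  rwa [hF] at this

lemma not_isSquare_neg_iff (hF : Fintype.card F = 9) (s : F) : ¬ IsSquare (-s) ↔ s ^ 4 = -1 := by
  have hF2 := ringChar_ne_two_of_card_eq_nine hF
  rcases eq_or_ne s 0 with rfl | hs
  · simp
  · have h1 := FiniteField.isSquare_iff hF2 (neg_ne_zero.mpr hs)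
    rw [hF] at h1
    norm_num at h1
    rw [h1]
    have h2 := pow_four_eq_one_or_neg_one hF hs
    have h3 : (-1 : F) ≠ 1 := Ring.neg_one_ne_one_of_char_ne_two hF2
    constructor
    · tauto
    · intro hneg hone
      exact h3 (hneg.symm.trans hone)

/-- If no product `a * b * c` equals `-1`, then all elements of `B` have the same fourth power. -/
lemma pow_four_eq_of_mul_ne_neg_one (hF : Fintype.card F = 9) {A B C : Finset F}
    (hA : A.card = 4) (hC : C.card = 4) (hA0 : 0 ∉ A) (hB0 : 0 ∉ B) (hC0 : 0 ∉ C)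
    (h : ∀ a ∈ A, ∀ b ∈ B, ∀ c ∈ C, a * b * c ≠ -1) {b b' : F} (hb : b ∈ B) (hb' : b' ∈ B) :
    b ^ 4 = b' ^ 4 := by
  classical
  have himg : ∀ b ∈ B, ∏ a ∈ A, -(a * b)⁻¹ = ∏ x ∈ (insert 0 C)ᶜ, x := by
    intro b hb
    have hb0 : b ≠ 0 := fun h => hB0 (h ▸ hb)
    have hinj : Set.InjOn (fun a => -(a * b)⁻¹) A := by
      intro x _ y _ hxy
      exact mul_right_cancel₀ hb0 (inv_injective (neg_injective hxy))
    rw [← Finset.prod_image (f := fun x => x) hinj]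
    congr 1
    refine Finset.eq_of_subset_of_card_le ?_ ?_
    · intro x hx
      obtain ⟨a, ha, rfl⟩ := Finset.mem_image.mp hx
      have ha0 : a ≠ 0 := fun h => hA0 (h ▸ ha)
      rw [Finset.mem_compl, Finset.mem_insert, not_or]
      refine ⟨by simp [ha0, hb0], fun hc => h a ha b hb _ hc ?_⟩
      field_simp
    · rw [Finset.card_image_of_injOn hinj, Finset.card_compl, Finset.card_insert_of_notMem hC0]
      omega
  have h1 := (himg b hb).trans (himg b' hb').symm
  simp only [Finset.prod_neg, mul_inv, Finset.prod_mul_distrib, Finset.prod_const, hA] at h1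
  have hA' : ∏ a ∈ A, a⁻¹ ≠ 0 :=
    Finset.prod_ne_zero_iff.mpr fun a ha => inv_ne_zero fun h => hA0 (h ▸ ha)
  have h2 := mul_left_cancel₀ hA' (mul_left_cancel₀ (by simp) h1)
  rw [inv_pow, inv_pow] at h2
  exact inv_injective h2

/-- Three four-element sets in the field of order nine without product `-1` can be scaled to the
set of solutions of `x ^ 4 = -1`. -/
lemma exists_scaling (hF : Fintype.card F = 9) {A B C : Finset F} (hA : A.card = 4)
    (hB : B.card = 4) (hC : C.card = 4) (hA0 : 0 ∉ A) (hB0 : 0 ∉ B) (hC0 : 0 ∉ C)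
    (h : ∀ a ∈ A, ∀ b ∈ B, ∀ c ∈ C, a * b * c ≠ -1) :
    ∃ k l m : F, k * l * m = 1 ∧ (∀ x, x ∈ A ↔ (k * x) ^ 4 = -1) ∧
      (∀ x, x ∈ B ↔ (l * x) ^ 4 = -1) ∧ ∀ x, x ∈ C ↔ (m * x) ^ 4 = -1 := by
  obtain ⟨a, ha⟩ := Finset.card_pos.mp (by omega : 0 < A.card)
  obtain ⟨b, hb⟩ := Finset.card_pos.mp (by omega : 0 < B.card)
  obtain ⟨c, hc⟩ := Finset.card_pos.mp (by omega : 0 < C.card)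
  have ha0 : a ≠ 0 := fun h => hA0 (h ▸ ha)
  have hb0 : b ≠ 0 := fun h => hB0 (h ▸ hb)
  have hc0 : c ≠ 0 := fun h => hC0 (h ▸ hc)
  have memA := mem_iff_pow_four_eq hA (fun x hx y hy =>
    pow_four_eq_of_mul_ne_neg_one hF hB hC hB0 hA0 hC0
      (fun b hb a ha c hc => mul_comm a b ▸ h a ha b hb c hc) hx hy) ha
  have memB := mem_iff_pow_four_eq hB (fun x hx y hy =>
    pow_four_eq_of_mul_ne_neg_one hF hA hC hA0 hB0 hC0 h hx hy) hb
  have memC := mem_iff_pow_four_eq hC (fun x hx y hy =>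
    pow_four_eq_of_mul_ne_neg_one hF hA hB hA0 hC0 hB0
      (fun a ha c hc b hb => mul_right_comm a b c ▸ h a ha b hb c hc) hx hy) hc
  have habc : (a * b * c) ^ 4 = -1 := by
    refine (pow_four_eq_one_or_neg_one hF (by simp [ha0, hb0, hc0])).resolve_left fun h1 => ?_
    refine h a ha b hb (-(a * b)⁻¹) ((memC _).mpr ?_) (by field_simp)
    rw [Even.neg_pow (by decide), inv_pow]
    rw [mul_pow] at h1
    exact inv_eq_of_mul_eq_one_right h1
  obtain ⟨y, hy⟩ := FiniteField.exists_nonsquare (ringChar_ne_two_of_card_eq_nine hF)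
  obtain ⟨n, rfl⟩ : ∃ n, y = -n := ⟨-y, by simp⟩
  have hn := (not_isSquare_neg_iff hF n).mp hy
  have hn0 : n ≠ 0 := by
    rintro rfl
    simp at hn
  refine ⟨n / a, n / b, a * b / n ^ 2, by field_simp, fun x => ?_, fun x => ?_, fun x => ?_⟩
  · rw [memA]
    have : (n / a * x) ^ 4 = - (x ^ 4 / a ^ 4) := by
      rw [mul_pow, div_pow, hn]
      ring
    rw [this, neg_inj, div_eq_one_iff_eq (pow_ne_zero _ ha0)]
  · rw [memB]
    have : (n / b * x) ^ 4 = - (x ^ 4 / b ^ 4) := by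
      rw [mul_pow, div_pow, hn]
      ring
    rw [this, neg_inj, div_eq_one_iff_eq (pow_ne_zero _ hb0)]
  · rw [memC]
    have : (a * b / n ^ 2 * x) ^ 4 = - (x ^ 4 / c ^ 4) := by
      have h1 : (a * b / n ^ 2) ^ 4 = (a * b) ^ 4 := by
        rw [div_pow, ← pow_mul, show n ^ (2 * 4) = (n ^ 4) ^ 2 by ring, hn]
        simp
      rw [mul_pow, h1]
      field_simp
      linear_combination habc * x ^ 4
    rw [this, neg_inj, div_eq_one_iff_eq (pow_ne_zero _ hc0)]

end FieldOfNine

section Triangle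

variable {F : Type*} [Field F]

lemma add_smul_rep_ne_zero {U V : PGPoint F} (h : U ≠ V) (a : F) : U.rep + a • V.rep ≠ 0 := by
  intro h0
  have := LinearIndependent.pair_iff.mp (Projectivization.linearIndependent_pair_iff_ne.mpr h) 1 a
    (by simpa using h0)
  exact one_ne_zero this.1

/-- The points of the line joining `U` and `V`, except `V`. -/
noncomputable def pgParam {U V : PGPoint F} (h : U ≠ V) (a : F) : PGPoint F :=
  Projectivization.mk F (U.rep + a • V.rep) (add_smul_rep_ne_zero h a)

lemma pgParam_injective {U V : PGPoint F} (h : U ≠ V) : (pgParam h).Injective := by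
  intro x y hxy
  obtain ⟨a, ha⟩ := (Projectivization.mk_eq_mk_iff' ..).mp hxy
  have := LinearIndependent.pair_iff.mp (Projectivization.linearIndependent_pair_iff_ne.mpr h)
    (a - 1) (a * y - x) (by rw [← sub_eq_zero.mpr ha]; module)
  have h1 := sub_eq_zero.mp this.1
  have h2 := sub_eq_zero.mp this.2
  rw [h1, one_mul] at h2
  exact h2.symm

lemma pgParam_zero {U V : PGPoint F} (h : U ≠ V) : pgParam h 0 = U := by
  conv_rhs => rw [← U.mk_rep]
  simp only [pgParam, zero_smul, add_zero]

lemma pgMem_pgParam {U V : PGPoint F} (h : U ≠ V) {L : PGLine F} (hU : pgMem U L)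
    (hV : pgMem V L) (a : F) : pgMem (pgParam h a) L := by
  rw [pgMem_iff_rep_mem] at hU hV
  exact (pgMem_mk _).mpr (add_mem hU (L.val.smul_mem a hV))

lemma exists_pgParam_eq {U V P : PGPoint F} (h : U ≠ V) {L : PGLine F} (hU : pgMem U L)
    (hV : pgMem V L) (hP : pgMem P L) (hPV : P ≠ V) : ∃ a, pgParam h a = P := by
  rw [eq_pgJoin h hU hV, pgMem_iff_rep_mem] at hP
  obtain ⟨x, y, hxy⟩ : ∃ x y : F, x • U.rep + y • V.rep = P.rep := by
    rw [← Submodule.mem_span_pair, Submodule.span_insert, ← U.submodule_eq, ← V.submodule_eq]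
    exact hP
  have hx : x ≠ 0 := by
    rintro rfl
    apply hPV
    rw [← P.mk_rep, ← V.mk_rep, Projectivization.mk_eq_mk_iff']
    exact ⟨y, by simpa using hxy⟩
  refine ⟨y / x, ?_⟩
  conv_rhs => rw [← P.mk_rep]
  rw [pgParam, Projectivization.mk_eq_mk_iff']
  refine ⟨x⁻¹, ?_⟩
  rw [← hxy, smul_add, smul_smul, smul_smul, inv_mul_cancel₀ hx, one_smul, div_eq_inv_mul]

variable [Fintype F] {S : Set (PGPoint F)}

lemma exists_param_finset {U V : PGPoint F} (h : U ≠ V) {L : PGLine F} (hU : pgMem U L)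
    (hV : pgMem V L) (hUS : U ∉ S) (hVS : V ∉ S) :
    ∃ A : Finset F, A.card = nsec S L ∧ 0 ∉ A ∧ (∀ a, a ∈ A ↔ pgParam h a ∈ S) ∧
      ∀ P ∈ S, pgMem P L → ∃ a ∈ A, pgParam h a = P := by
  classical
  have hA : ∀ a, a ∈ Finset.univ.filter (fun a => pgParam h a ∈ S) ↔ pgParam h a ∈ S := by simp
  have hex : ∀ P ∈ S, pgMem P L → ∃ a ∈ Finset.univ.filter (fun a => pgParam h a ∈ S),
      pgParam h a = P := by
    intro P hP hPL
    obtain ⟨a, rfl⟩ := exists_pgParam_eq h hU hV hPL fun hPV => hVS (hPV ▸ hP)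
    exact ⟨a, (hA a).mpr hP, rfl⟩
  refine ⟨Finset.univ.filter fun a => pgParam h a ∈ S, ?_, ?_, hA, hex⟩
  · rw [nsec, ← Set.ncard_coe_finset, ← Set.ncard_image_of_injective _ (pgParam_injective h)]
    congr 1
    ext P
    constructor
    · rintro ⟨a, ha, rfl⟩
      exact ⟨(hA a).mp ha, pgMem_pgParam h hU hV a⟩
    · rintro ⟨hP, hPL⟩
      exact hex P hP hPL
  · rwa [hA, pgParam_zero]

/-- A semioval of size `q + 3` with three four-secants is a Blokhuis semioval. -/
theorem projEquivalent_blokhuis_of_three_four_secants (hS : isSemioval S)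
    (hsize : S.ncard = Fintype.card F + 3) (hF : Fintype.card F = 9) {L M N : PGLine F}
    (hLM : L ≠ M) (hLN : L ≠ N) (hMN : M ≠ N) (hL : nsec S L = 4) (hM : nsec S M = 4)
    (hN : nsec S N = 4) (hcov : ∀ P ∈ S, pgMem P L ∨ pgMem P M ∨ pgMem P N) :
    projEquivalent (blokhuisSemioval F) S := by
  have hdLM : ∀ P ∈ S, pgMem P L → ¬ pgMem P M := fun P hP h1 h2 =>
    hLM (four_secant_eq hS hsize hP hL hM h1 h2).symm
  have hdLN : ∀ P ∈ S, pgMem P L → ¬ pgMem P N := fun P hP h1 h2 =>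
    hLN (four_secant_eq hS hsize hP hL hN h1 h2).symm
  have hdMN : ∀ P ∈ S, pgMem P M → ¬ pgMem P N := fun P hP h1 h2 =>
    hMN (four_secant_eq hS hsize hP hM hN h1 h2).symm
  obtain ⟨X, hXL, hX⟩ := exists_center_of_four_secants hS hsize hL
  have hXM := hX M hLM.symm hM
  have hXN := hX N hLN.symm hN
  obtain ⟨hYL, hYN⟩ := pgMem_pgMeet hLN
  set Y := pgMeet hLN
  obtain ⟨hZL, hZM⟩ := pgMem_pgMeet hLM
  set Z := pgMeet hLM
  have hXY : X ≠ Y := fun h => hXL (h ▸ hYL)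
  have hZX : Z ≠ X := fun h => hXL (h ▸ hZL)
  have hYZ : Y ≠ Z := fun h => hMN (pgLine_eq_of_pgMem hXY hXM (h ▸ hZM) hXN hYN)
  have hXS : X ∉ S := fun h => hdMN X h hXM hXN
  have hYS : Y ∉ S := fun h => hdLN Y h hYL hYN
  have hZS : Z ∉ S := fun h => hdLM Z h hZL hZM
  obtain ⟨A, hA4, hA0, hA, hexA⟩ := exists_param_finset hYZ hYL hZL hYS hZS
  obtain ⟨B, hB4, hB0, hB, hexB⟩ := exists_param_finset hZX hZM hXM hZS hXS
  obtain ⟨C, hC4, hC0, hC, hexC⟩ := exists_param_finset hXY hXN hYN hXS hYS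
  have hli := linearIndependent_of_not_pgMem hYZ hYL hZL hXL
  set e := basisOfLinearIndependentOfCardEqFinrank hli (by simp) with he
  have he0 : e 0 = X.rep := by simp [he]
  have he1 : e 1 = Y.rep := by simp [he]
  have he2 : e 2 = Z.rep := by simp [he]
  have hdual : ∀ i j, e.coord i (e j) = if j = i then 1 else 0 := by
    intro i j
    rw [e.coord_apply, e.repr_self, Finsupp.single_apply]
  have habc : ∀ a ∈ A, ∀ b ∈ B, ∀ c ∈ C, a * b * c ≠ -1 := by
    intro a ha b hb c hc h
    have hφ : e.coord 0 + (a * b) • e.coord 1 - b • e.coord 2 ≠ 0 := fun h => by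
      simpa [hdual, -Module.Basis.coord_apply] using LinearMap.congr_fun h (e 0)
    set K := pgLineOfDual _ hφ
    have haS := (hA a).mp ha
    have hbS := (hB b).mp hb
    have hcS := (hC c).mp hc
    have haL := pgMem_pgParam hYZ hYL hZL a
    have hbM := pgMem_pgParam hZX hZM hXM b
    have hcN := pgMem_pgParam hXY hXN hYN c
    have haK : pgMem (pgParam hYZ a) K := by
      refine (pgMem_pgLineOfDual hφ _).mpr ?_
      rw [← he1, ← he2]
      simp only [map_add, map_smul, LinearMap.add_apply, LinearMap.sub_apply, LinearMap.smul_apply,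
        hdual, smul_eq_mul]
      simp
    have hbK : pgMem (pgParam hZX b) K := by
      refine (pgMem_pgLineOfDual hφ _).mpr ?_
      rw [← he0, ← he2]
      simp only [map_add, map_smul, LinearMap.add_apply, LinearMap.sub_apply, LinearMap.smul_apply,
        hdual, smul_eq_mul]
      simp
    have hcK : pgMem (pgParam hXY c) K := by
      refine (pgMem_pgLineOfDual hφ _).mpr ?_
      rw [← he0, ← he1]
      simp only [map_add, map_smul, LinearMap.add_apply, LinearMap.sub_apply, LinearMap.smul_apply,
        hdual, smul_eq_mul]
      simp
      linear_combination h
    have h1 := three_le_nsec haS hbS hcS haK hbK hcK (fun h => hdLM _ haS haL (h ▸ hbM))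
      (fun h => hdLN _ haS haL (h ▸ hcN)) (fun h => hdMN _ hbS hbM (h ▸ hcN))
    have h2 := nsec_le_two_of_ne hS hsize haS haL hL haK fun h => hdLM _ hbS (h ▸ hbK) hbM
    omega
  obtain ⟨k, l, m, hklm, hkA, hlB, hmC⟩ := exists_scaling hF (hA4.trans hL) (hB4.trans hM)
    (hC4.trans hN) hA0 hB0 hC0 habc
  have hk : k ≠ 0 := by
    rintro rfl
    simp at hklm
  have hm : m ≠ 0 := by
    rintro rfl
    simp at hklm
  set f := e.unitsSMul ![Units.mk0 (k * m) (mul_ne_zero hk hm), Units.mk0 k hk, 1] with hf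
  have hf0 : f 0 = (k * m) • X.rep := by
    rw [hf, Module.Basis.unitsSMul_apply, he0]
    rfl
  have hf1 : f 1 = k • Y.rep := by
    rw [hf, Module.Basis.unitsSMul_apply, he1]
    rfl
  have hf2 : f 2 = Z.rep := by
    rw [hf, Module.Basis.unitsSMul_apply, he2]
    exact one_smul _ _
  have hmapA : ∀ s, Projectivization.map (σ := RingHom.id F) f.equivFun.symm.toLinearMap
      f.equivFun.symm.injective
      (Projectivization.mk F ![0, 1, s] (vec_ne_zero_of_coord_one _ 1 rfl)) =
      pgParam hYZ (s / k) := by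
    intro s
    rw [Projectivization.map_mk, pgParam, Projectivization.mk_eq_mk_iff']
    refine ⟨k, ?_⟩
    rw [LinearEquiv.coe_coe, Module.Basis.equivFun_symm_apply, Fin.sum_univ_three, hf0, hf1, hf2]
    simp [smul_smul, mul_div_cancel₀ _ hk]
  have hmapB : ∀ s, Projectivization.map (σ := RingHom.id F) f.equivFun.symm.toLinearMap
      f.equivFun.symm.injective
      (Projectivization.mk F ![s, 0, 1] (vec_ne_zero_of_coord_one _ 2 rfl)) =
      pgParam hZX (s * (k * m)) := by
    intro s
    rw [Projectivization.map_mk, pgParam, Projectivization.mk_eq_mk_iff']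
    refine ⟨1, ?_⟩
    rw [LinearEquiv.coe_coe, Module.Basis.equivFun_symm_apply, Fin.sum_univ_three, hf0, hf1, hf2]
    simp [smul_smul, add_comm]
  have hmapC : ∀ s, Projectivization.map (σ := RingHom.id F) f.equivFun.symm.toLinearMap
      f.equivFun.symm.injective
      (Projectivization.mk F ![1, s, 0] (vec_ne_zero_of_coord_one _ 0 rfl)) =
      pgParam hXY (s / m) := by
    intro s
    rw [Projectivization.map_mk, pgParam, Projectivization.mk_eq_mk_iff']
    refine ⟨k * m, ?_⟩
    rw [LinearEquiv.coe_coe, Module.Basis.equivFun_symm_apply, Fin.sum_univ_three, hf0, hf1, hf2]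
    have : k * m * (s / m) = s * k := by field_simp
    simp [smul_smul, this]
  refine ⟨f.equivFun.symm, ?_⟩
  ext P
  constructor
  · rintro ⟨_, ⟨s, hs, rfl | rfl | rfl⟩, rfl⟩ <;> rw [not_isSquare_neg_iff hF] at hs
    · rw [hmapA, ← hA, hkA, mul_div_cancel₀ _ hk, hs]
    · rw [hmapB, ← hB, hlB, show l * (s * (k * m)) = k * l * m * s by ring, hklm, one_mul, hs]
    · rw [hmapC, ← hC, hmC, mul_div_cancel₀ _ hm, hs]
  · intro hP
    rcases hcov P hP with h | h | h
    · obtain ⟨a, ha, rfl⟩ := hexA P hP h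
      refine ⟨_, ⟨k * a, (not_isSquare_neg_iff hF _).mpr ((hkA a).mp ha), Or.inl rfl⟩, ?_⟩
      rw [hmapA, mul_div_cancel_left₀ _ hk]
    · obtain ⟨b, hb, rfl⟩ := hexB P hP h
      refine ⟨_, ⟨l * b, (not_isSquare_neg_iff hF _).mpr ((hlB b).mp hb), Or.inr (Or.inl rfl)⟩, ?_⟩
      rw [hmapB, show l * b * (k * m) = k * l * m * b by ring, hklm, one_mul]
    · obtain ⟨c, hc, rfl⟩ := hexC P hP h
      refine ⟨_, ⟨m * c, (not_isSquare_neg_iff hF _).mpr ((hmC c).mp hc), Or.inr (Or.inr rfl)⟩, ?_⟩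
      rw [hmapC, mul_div_cancel_left₀ _ hm]

end Triangle

/-- Let `S` be a semioval of size `q + 3` in `PG(2,q)`, `q = p^h`.  Then one of the following
holds: `q = 5` and `S` is the symmetric difference of two lines with one further point
removed from both lines; or `q = 9` and `S` is projectively equivalent to the Blokhuis
semioval; or `p = 3` and `S` is a `(q+3,3)`-arc, i.e. every line meets `S` in at most `3`
points. -/
theorem stmt_9 {F : Type*} [Field F] [Fintype F] (p h q : ℕ) (hp : p.Prime) (hq : q = p ^ h)
    (hcard : Fintype.card F = q)
    (S : Set (PGPoint F)) (hS : isSemioval S) (hsize : S.ncard = q + 3) :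
    (q = 5 ∧ ∃ ℓ₁ ℓ₂ : PGLine F, isSymmDiffOfTwoLinesMinusTwoPoints S ℓ₁ ℓ₂) ∨
    (q = 9 ∧ projEquivalent (blokhuisSemioval F) S) ∨
    (p = 3 ∧ ∀ L : PGLine F, nsec S L ≤ 3) := by
  have hsize' : S.ncard = Fintype.card F + 3 := by rw [hsize, hcard]
  by_cases h4 : ∃ L, nsec S L = 4
  · obtain ⟨L₀, hL₀⟩ := h4
    rcases four_secant_cases hS hsize' hL₀ with
      ⟨hF, L, M, hLM, hL, hM, hcov⟩ | ⟨hF, L, M, N, hLM, hLN, hMN, hL, hM, hN, hcov⟩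
    · exact Or.inl ⟨hcard.symm.trans hF, L, M,
        isSymmDiff_of_two_four_secants hS hsize' hF hLM hL hM hcov⟩
    · exact Or.inr (Or.inl ⟨hcard.symm.trans hF, projEquivalent_blokhuis_of_three_four_secants hS
        hsize' hF hLM hLN hMN hL hM hN hcov⟩)
  · push Not at h4
    refine Or.inr (Or.inr ⟨?_, fun L => ?_⟩)
    · have h3 := three_dvd_card hS hsize' h4
      rw [hcard, hq] at h3
      exact ((Nat.prime_dvd_prime_iff_eq Nat.prime_three hp).mp
        (Nat.prime_three.dvd_of_dvd_pow h3)).symm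
    · have h1 := nsec_le_four hS hsize' L
      have h2 := h4 L
      omega
end

section
/- Let S be a semioval in a projective plane of order q with |S| = q + 1 + ε. Then the number of odd-secants of S is at most |S|(1 + ε/3). -/
open Configuration in
/-- A projective plane all of whose lines are finite has finitely many points. -/
theorem finite_points_of_finite_lines {P L : Type*} [Membership P L]
    [ProjectivePlane P L] (h : ∀ l : L, {x : P | x ∈ l}.Finite) : Finite P := by
  obtain ⟨-, -, -, l₀, -⟩ := ProjectivePlane.exists_config (P := P) (L := L)
  obtain ⟨x, hx⟩ := Nondegenerate.exists_point (P := P) l₀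
  have hcover : (⋃ y ∈ {y : P | y ∈ l₀}, {p | ∃ m : L, x ∈ m ∧ y ∈ m ∧ p ∈ m}).Finite := by
    refine (h l₀).biUnion fun y hy => ?_
    have hxy : x ≠ y := fun e => hx (e ▸ hy)
    obtain ⟨n, -, hn⟩ := HasLines.existsUnique_line P L x y hxy
    exact (h n).subset fun p ⟨m, hxm, hym, hpm⟩ => hn m ⟨hxm, hym⟩ ▸ hpm
  refine Set.finite_univ_iff.mp ((hcover.insert x).subset fun p _ => ?_)
  rcases eq_or_ne x p with rfl | hxp
  · exact Set.mem_insert _ _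
  · obtain ⟨m, ⟨hxm, hpm⟩, -⟩ := HasLines.existsUnique_line P L x p hxp
    have hml : m ≠ l₀ := fun e => hx (e ▸ hxm)
    obtain ⟨y, hy, -⟩ := HasPoints.existsUnique_point P L m l₀ hml
    exact Set.mem_insert_of_mem _ (Set.mem_biUnion hy.2 ⟨m, hxm, hy.1, hpm⟩)

open Configuration in
/-- A projective plane with finitely many points has finitely many lines, since a line is
determined by its points. -/
theorem finite_lines_of_finite_points {P L : Type*} [Membership P L]
    [ProjectivePlane P L] [Finite P] : Finite L := by
  refine Finite.of_injective (fun l : L => {x : P | x ∈ l}) fun l m hlm => ?_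
  by_contra hne
  obtain ⟨p, hp, huniq⟩ := HasPoints.existsUnique_point P L l m hne
  obtain ⟨n, hn⟩ := Nondegenerate.exists_line (L := L) p
  have hln : l ≠ n := fun e => hn (e ▸ hp.1)
  obtain ⟨y, hy, -⟩ := HasPoints.existsUnique_point P L l n hln
  exact hn (huniq y ⟨hy.1, (Set.ext_iff.mp hlm y).mp hy.1⟩ ▸ hy.2)

open Configuration Finset in
open scoped Classical in
/-- The lines through a point `x` of `S` partition the other points of `S`. -/
theorem sum_card_lines_through {P L : Type*} [Membership P L] [ProjectivePlane P L]
    [Fintype L] (S : Finset P) {x : P} (hx : x ∈ S) :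
    ∑ l : L with x ∈ l, #{y ∈ S | y ∈ l} + 1 = #S + #{l : L | x ∈ l} := by
  have hsplit : ∀ l ∈ ({l : L | x ∈ l} : Finset L),
      #{y ∈ S | y ∈ l} = #{y ∈ S.erase x | y ∈ l} + 1 := by
    intro l hl
    rw [filter_erase, card_erase_add_one]
    simpa [hx] using hl
  have hjoin : ∀ y ∈ S.erase x, #{l : L | x ∈ l ∧ y ∈ l} = 1 := by
    intro y hy
    obtain ⟨l, hl, huniq⟩ := HasLines.existsUnique_line P L x y (ne_of_mem_erase hy).symm
    rw [card_eq_one]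
    refine ⟨l, ?_⟩
    ext m
    simp only [mem_filter, mem_univ, true_and, mem_singleton]
    exact ⟨huniq m, fun h => h ▸ hl⟩
  have hcount : ∑ l : L with x ∈ l, #{y ∈ S.erase x | y ∈ l} = #(S.erase x) := by
    have h := sum_card_bipartiteAbove_eq_sum_card_bipartiteBelow
      (s := ({l : L | x ∈ l} : Finset L)) (t := S.erase x) (fun (l : L) (y : P) => y ∈ l)
    simp only [bipartiteAbove, bipartiteBelow, filter_filter] at h
    rw [h, sum_congr rfl hjoin, card_eq_sum_ones]
  rw [sum_congr rfl hsplit, sum_add_distrib, hcount, ← card_eq_sum_ones, ← card_erase_add_one hx]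
  ring

open Configuration Finset in
open scoped Classical in
/-- If every point of `S` is on `q + 1` lines, exactly one of them a tangent, and
`|S| = q + 1 + ε`, then three times the number of odd-secants is at most `|S| (3 + ε)`. -/
theorem three_mul_card_odd_secants_le {P L : Type*} [Membership P L] [ProjectivePlane P L]
    [Fintype L] (q ε : ℕ) (S : Finset P) (hsize : #S = q + 1 + ε)
    (hlines : ∀ x ∈ S, #{l : L | x ∈ l} = q + 1)
    (htangent : ∀ x ∈ S, ∃! l : L, x ∈ l ∧ #{y ∈ S | y ∈ l} = 1) :
    3 * #{l : L | Odd #{y ∈ S | y ∈ l}} ≤ #S * (3 + ε) := by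
  let k : L → ℕ := fun l => #{y ∈ S | y ∈ l}
  -- The weight of an odd-secant, chosen so that `3 ≤ weight l * k l`.
  let weight : L → ℤ := fun l => if k l = 1 then 3 else if Odd (k l) then 1 else 0
  have hpoint : ∀ x ∈ S, ∑ l : L with x ∈ l, weight l ≤ 3 + ε := by
    intro x hx
    have hle : ∀ l ∈ ({l : L | x ∈ l} : Finset L),
        weight l ≤ ((k l : ℤ) - 2) + 4 * (if k l = 1 then 1 else 0) := by
      intro l hl
      have hpos : 0 < k l := card_pos.mpr ⟨x, by simpa [hx] using hl⟩
      simp only [weight]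
      grind
    have hone : ∑ l : L with x ∈ l, (if k l = 1 then 1 else 0 : ℤ) = 1 := by
      obtain ⟨t, ht, huniq⟩ := htangent x hx
      rw [sum_boole, filter_filter, show ({l : L | x ∈ l ∧ k l = 1} : Finset L) = {t} from ?_]
      · simp
      · ext m
        simp only [mem_filter, mem_univ, true_and, mem_singleton]
        exact ⟨huniq m, fun h => h ▸ ht⟩
    have hsum : ∑ l : L with x ∈ l, (k l : ℤ) + 1 = #S + #{l : L | x ∈ l} := by
      exact_mod_cast sum_card_lines_through (L := L) S hx
    have htotal := sum_le_sum hle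
    rw [sum_add_distrib, ← mul_sum, hone, sum_sub_distrib, sum_const, hlines x hx] at htotal
    rw [hlines x hx, hsize] at hsum
    push_cast at hsum
    simp only [nsmul_eq_mul] at htotal
    push_cast at htotal
    linarith
  have hswap : ∑ x ∈ S, ∑ l : L with x ∈ l, weight l = ∑ l : L, weight l * k l := by
    simp only [sum_filter]
    rw [sum_comm]
    refine sum_congr rfl fun l _ => ?_
    rw [← sum_filter, sum_const, nsmul_eq_mul, mul_comm]
  have hodd : (3 : ℤ) * #{l : L | Odd (k l)} ≤ ∑ l : L, weight l * k l := by
    rw [← sum_boole, mul_sum]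
    refine sum_le_sum fun l _ => ?_
    simp only [weight]
    grind
  have hbound := sum_le_sum hpoint
  rw [hswap, sum_const, nsmul_eq_mul] at hbound
  exact_mod_cast hodd.trans hbound

/-- Let `S` be a semioval in a projective plane of order `q` (every line contains exactly
`q + 1` points) with `|S| = q + 1 + ε`.  Then the number of odd-secants of `S` is at most
`|S| · (1 + ε/3)`. -/
theorem stmt_10 {P L : Type*} [Membership P L] [Configuration.ProjectivePlane P L]
    (q : ℕ) (horder : ∀ l : L, {x : P | x ∈ l}.ncard = q + 1)
    (S : Set P)
    -- `S` is a semioval: through each point of `S` there is exactly one tangent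
    (hS : ∀ x ∈ S, ∃! l : L, x ∈ l ∧ {y ∈ S | y ∈ l}.ncard = 1)
    (ε : ℕ) (hsize : S.ncard = q + 1 + ε) :
    ({l : L | Odd ({y ∈ S | y ∈ l}).ncard}.ncard : ℚ) ≤ (S.ncard : ℚ) * (1 + (ε : ℚ) / 3) := by
  classical
  have : Finite P := finite_points_of_finite_lines fun l : L =>
    Set.finite_of_ncard_ne_zero (by rw [horder]; omega)
  have : Finite L := finite_lines_of_finite_points (P := P)
  have := Fintype.ofFinite P
  have := Fintype.ofFinite L
  have hsecant (l : L) : {y ∈ S | y ∈ l}.ncard = (S.toFinset.filter (· ∈ l)).card := by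
    rw [← Set.ncard_coe_finset]
    simp
  have hlines (x : P) : (Finset.univ.filter fun l : L => x ∈ l).card = q + 1 := by
    obtain ⟨l, -⟩ := Configuration.Nondegenerate.exists_line (L := L) x
    have h := Configuration.ProjectivePlane.lineCount_eq_pointCount x l
    rw [Configuration.lineCount, Configuration.pointCount, Nat.card_eq_fintype_card,
      Fintype.card_subtype] at h
    rw [h, ← horder l]
    exact Nat.card_coe_set_eq _
  simp only [hsecant] at hS ⊢
  have hmain := three_mul_card_odd_secants_le q ε S.toFinset
    (by rw [← Set.ncard_eq_toFinset_card', hsize]) (fun x _ => hlines x)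
    (fun x hx => hS x (Set.mem_toFinset.mp hx))
  rw [← Set.ncard_eq_toFinset_card'] at hmain
  rw [Set.ncard_eq_toFinset_card', Set.toFinset_ofPred]
  have hcast := Nat.cast_le (α := ℚ).mpr hmain
  push_cast at hcast
  linarith
end

section
/- Let S be a point set of size q + 2 in a projective plane of order q and let P be a point of S. (1) If P is contained in a k-secant of S, then w(P) ≥ k − 2. (2) If P is contained in at least k trisecants of S, then w(P) ≥ (4/3)k. -/
/-- `tsec S x i` is `t_i(x)`: the number of `i`-secants of the point set `S` through the
point `x` (lines `l` with `x ∈ l` and `|S ∩ l| = i`). -/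
noncomputable def tsec {P : Type*} (L : Type*) [Membership P L] (S : Set P) (x : P) (i : ℕ) : ℕ :=
  {l : L | x ∈ l ∧ {y ∈ S | y ∈ l}.ncard = i}.ncard

/-- The weight `w(x) = Σ_{i odd} t_i(x)/i` of a point `x` of a point set `S` in a projective
plane of order `q`; every line meets `S` in at most `q + 1` points, so it suffices to let `i`
range over `0, 1, …, q + 1`. -/
noncomputable def pointWeight {P : Type*} (L : Type*) [Membership P L] (q : ℕ) (S : Set P)
    (x : P) : ℚ :=
  ∑ i ∈ Finset.range (q + 2), if Odd i then (tsec L S x i : ℚ) / (i : ℚ) else 0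

open Configuration

section Membership

variable {P L : Type*} [Membership P L]

theorem one_le_ncard_secant {S : Set P} (hS : S.Finite) {x : P} (hx : x ∈ S) {m : L}
    (hm : x ∈ m) : 1 ≤ {y ∈ S | y ∈ m}.ncard :=
  (Set.ncard_pos (hS.subset fun _ h => h.1)).2 ⟨x, hx, hm⟩

theorem pointWeight_term_nonneg (S : Set P) (x : P) (i : ℕ) :
    0 ≤ if Odd i then (tsec L S x i : ℚ) / (i : ℚ) else 0 := by
  split_ifs <;> positivity

theorem tsec_one_le_pointWeight (q : ℕ) (S : Set P) (x : P) :
    (tsec L S x 1 : ℚ) ≤ pointWeight L q S x := by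
  have h := Finset.single_le_sum (s := Finset.range (q + 2))
    (fun i _ => pointWeight_term_nonneg (L := L) S x i) (Finset.mem_range.2 (by omega : 1 < q + 2))
  simpa [pointWeight] using h

theorem tsec_one_add_tsec_three_div_le_pointWeight {q : ℕ}
    (horder : ∀ l : L, {y : P | y ∈ l}.ncard = q + 1) (S : Set P) (x : P) :
    (tsec L S x 1 : ℚ) + tsec L S x 3 / 3 ≤ pointWeight L q S x := by
  rcases Nat.eq_zero_or_pos (tsec L S x 3) with h0 | hpos
  · simpa [h0] using tsec_one_le_pointWeight (L := L) q S x
  · obtain ⟨l, -, hl⟩ := Set.nonempty_of_ncard_ne_zero hpos.ne'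
    have hle : 3 ≤ q + 1 := by
      rw [← hl, ← horder l]
      refine Set.ncard_le_ncard (fun _ h => h.2) (Set.finite_of_ncard_pos ?_)
      rw [horder l]
      omega
    have hsub : ({1, 3} : Finset ℕ) ⊆ Finset.range (q + 2) := by
      intro i hi
      simp only [Finset.mem_insert, Finset.mem_singleton] at hi
      rw [Finset.mem_range]
      omega
    have h := Finset.sum_le_sum_of_subset_of_nonneg hsub
      (fun i _ _ => pointWeight_term_nonneg (L := L) S x i)
    have h3 : Odd 3 := by decide
    rw [Finset.sum_pair (by norm_num), if_pos odd_one, if_pos h3] at h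
    simpa [pointWeight] using h

end Membership

section ProjectivePlane

variable {P L : Type*} [Membership P L] [ProjectivePlane P L]

/-- In a projective plane, joining `x` to the points of a line off `x` shows that there are as many
lines through `x` as points on that line. -/
theorem ncard_lines_through_eq_ncard_points {x : P} {l : L} (hxl : x ∉ l) :
    {m : L | x ∈ m}.ncard = {y : P | y ∈ l}.ncard := by
  have hne (m : L) (hm : x ∈ m) : m ≠ l := by
    rintro rfl
    exact hxl hm
  refine Set.ncard_congr (fun m hm => HasPoints.mkPoint (hne m hm)) ?_ ?_ ?_
  · intro m hm
    exact (HasPoints.mkPoint_ax (hne m hm)).2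
  · intro m m' hm hm' h
    have h₁ := HasPoints.mkPoint_ax (P := P) (hne m hm)
    have h₂ := HasPoints.mkPoint_ax (P := P) (hne m' hm')
    rw [← h] at h₂
    refine (Nondegenerate.eq_or_eq (P := P) (L := L) hm h₁.1 hm' h₂.1).resolve_left ?_
    intro hx
    exact hxl (hx ▸ h₁.2)
  · intro y hy
    have hxy : x ≠ y := by
      rintro rfl
      exact hxl hy
    have hm := HasLines.mkLine_ax (L := L) hxy
    refine ⟨HasLines.mkLine hxy, hm.1, ?_⟩
    have h := HasPoints.mkPoint_ax (P := P) (hne _ hm.1)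
    exact (Nondegenerate.eq_or_eq h.1 hm.2 h.2 hy).resolve_right (hne _ hm.1)

theorem finite_lines_through_and_ncard {q : ℕ}
    (horder : ∀ l : L, {y : P | y ∈ l}.ncard = q + 1) (x : P) :
    {m : L | x ∈ m}.Finite ∧ {m : L | x ∈ m}.ncard = q + 1 := by
  obtain ⟨l, hxl⟩ := Nondegenerate.exists_line (L := L) x
  have h : {m : L | x ∈ m}.ncard = q + 1 :=
    (ncard_lines_through_eq_ncard_points hxl).trans (horder l)
  exact ⟨Set.finite_of_ncard_pos (by omega), h⟩

/-- The lines through `x` partition the points of `S` other than `x`. -/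
theorem sum_ncard_secant_sub_one {S : Set P} (hS : S.Finite) {x : P} (hx : x ∈ S)
    {F : Finset L} (hF : ∀ m, m ∈ F ↔ x ∈ m) :
    ∑ m ∈ F, (({y ∈ S | y ∈ m}.ncard : ℚ) - 1) = (S.ncard : ℚ) - 1 := by
  classical
  have : Nonempty L := (Nondegenerate.exists_line (L := L) x).nonempty
  choose! line hline using fun (y : P) (h : x ≠ y) => HasLines.existsUnique_line P L x y h
  have hfib := Finset.card_eq_sum_card_fiberwise (f := line) (s := hS.toFinset.erase x) (t := F)
    (fun y hy => by
      simp only [Finset.coe_erase, Set.mem_sdiff, Set.mem_singleton_iff] at hy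
      exact (hF _).2 (hline y (Ne.symm hy.2)).1.1)
  have hpoint (m : L) (hm : m ∈ F) :
      (((hS.toFinset.erase x).filter fun y => line y = m).card : ℚ) =
        ({y ∈ S | y ∈ m}.ncard : ℚ) - 1 := by
    have hset : {y ∈ S | y ∈ m} =
        (insert x ((hS.toFinset.erase x).filter fun y => line y = m) : Finset P) := by
      ext y
      by_cases hyx : y = x
      · subst hyx
        simp [hx, (hF m).1 hm]
      · have hl := hline y (Ne.symm hyx)
        simp only [Set.mem_ofPred_eq, Finset.coe_insert, Set.mem_insert_iff, hyx, false_or,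
          Finset.mem_coe, Finset.mem_filter, Finset.mem_erase, Set.Finite.mem_toFinset, ne_eq,
          not_false_eq_true, true_and]
        refine and_congr_right fun _ => ⟨fun hy => (hl.2 m ⟨(hF m).1 hm, hy⟩).symm, ?_⟩
        rintro rfl
        exact hl.1.2
    rw [hset, Set.ncard_coe_finset, Finset.card_insert_of_notMem (by simp)]
    push_cast
    ring
  rw [← Finset.sum_congr rfl hpoint, ← Nat.cast_sum, ← hfib,
    Finset.card_erase_of_mem (hS.mem_toFinset.2 hx), ← Set.ncard_eq_toFinset_card S hS,
    Nat.cast_sub ((Set.ncard_pos hS).2 ⟨x, hx⟩), Nat.cast_one]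

/-- For a set of `q + 2` points, the tangents at `x` make up for the excess over `2` of the
longer secants through `x`. -/
theorem tsec_one_eq_sum {q : ℕ} (horder : ∀ l : L, {y : P | y ∈ l}.ncard = q + 1)
    {S : Set P} (hsize : S.ncard = q + 2) {x : P} (hx : x ∈ S)
    {F : Finset L} (hF : ∀ m, m ∈ F ↔ x ∈ m) :
    (tsec L S x 1 : ℚ) = ∑ m ∈ F, (({y ∈ S | y ∈ m}.ncard : ℚ) - 2 +
      if {y ∈ S | y ∈ m}.ncard = 1 then 1 else 0) := by
  have hS : S.Finite := Set.finite_of_ncard_pos (by omega)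
  have hsum := sum_ncard_secant_sub_one hS hx hF
  have hcard : F.card = q + 1 := by
    rw [← (finite_lines_through_and_ncard horder x).2, ← Set.ncard_coe_finset]
    congr 1
    ext m
    simp [hF]
  have htan : tsec L S x 1 = (F.filter fun m => {y ∈ S | y ∈ m}.ncard = 1).card := by
    rw [tsec, ← Set.ncard_coe_finset]
    congr 1
    ext m
    simp [hF]
  rw [Finset.sum_add_distrib, Finset.sum_boole, ← htan]
  rw [hsize, Finset.sum_sub_distrib, Finset.sum_const, hcard] at hsum
  rw [Finset.sum_sub_distrib, Finset.sum_const, hcard]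
  simp only [nsmul_eq_mul] at hsum ⊢
  push_cast at hsum ⊢
  linarith

theorem ncard_sub_two_le_tsec_one {q : ℕ} (horder : ∀ l : L, {y : P | y ∈ l}.ncard = q + 1)
    {S : Set P} (hsize : S.ncard = q + 2) {x : P} (hx : x ∈ S) {l : L} (hl : x ∈ l) :
    ({y ∈ S | y ∈ l}.ncard : ℚ) - 2 ≤ tsec L S x 1 := by
  have hS : S.Finite := Set.finite_of_ncard_pos (by omega)
  have hF (m : L) : m ∈ (finite_lines_through_and_ncard horder x).1.toFinset ↔ x ∈ m := by simp
  rw [tsec_one_eq_sum horder hsize hx hF]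
  refine le_trans ?_ (Finset.single_le_sum (fun m hm => ?_) ((hF l).2 hl))
  · split_ifs <;> simp
  · have h := one_le_ncard_secant hS hx ((hF m).1 hm)
    split_ifs with h1
    · rw [h1]; norm_num
    · have : (2 : ℚ) ≤ {y ∈ S | y ∈ m}.ncard := by exact_mod_cast (by omega)
      linarith

theorem tsec_three_le_tsec_one {q : ℕ} (horder : ∀ l : L, {y : P | y ∈ l}.ncard = q + 1)
    {S : Set P} (hsize : S.ncard = q + 2) {x : P} (hx : x ∈ S) :
    (tsec L S x 3 : ℚ) ≤ tsec L S x 1 := by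
  have hS : S.Finite := Set.finite_of_ncard_pos (by omega)
  have hF (m : L) : m ∈ (finite_lines_through_and_ncard horder x).1.toFinset ↔ x ∈ m := by simp
  have htri : tsec L S x 3 = ((finite_lines_through_and_ncard horder x).1.toFinset.filter
      fun m => {y ∈ S | y ∈ m}.ncard = 3).card := by
    rw [tsec, ← Set.ncard_coe_finset]
    congr 1
    ext m
    simp
  rw [tsec_one_eq_sum horder hsize hx hF, htri, ← Finset.sum_boole]
  refine Finset.sum_le_sum fun m hm => ?_
  have h := one_le_ncard_secant hS hx ((hF m).1 hm)
  generalize {y ∈ S | y ∈ m}.ncard = n at h ⊢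
  rcases (by omega : n = 1 ∨ n = 3 ∨ (n ≠ 1 ∧ n ≠ 3 ∧ 2 ≤ n)) with rfl | rfl | ⟨h1, h3, h2⟩
  · norm_num
  · norm_num
  · have : (2 : ℚ) ≤ n := by exact_mod_cast h2
    simp [h1, h3, this]

end ProjectivePlane

/-- Let `S` be a point set of size `q + 2` in a projective plane of order `q` (every line has
exactly `q + 1` points) and let `x ∈ S`.
(1) If `x` is contained in a `k`-secant of `S`, then `w(x) ≥ k − 2`.
(2) If `x` is contained in at least `k` trisecants of `S`, then `w(x) ≥ (4/3)·k`. -/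
theorem stmt_12 {P L : Type*} [Membership P L] [Configuration.ProjectivePlane P L]
    (q : ℕ) (horder : ∀ l : L, {y : P | y ∈ l}.ncard = q + 1)
    (S : Set P) (hsize : S.ncard = q + 2) (x : P) (hx : x ∈ S) :
    (∀ k : ℕ, (∃ l : L, x ∈ l ∧ {y ∈ S | y ∈ l}.ncard = k) →
      (k : ℚ) - 2 ≤ pointWeight L q S x) ∧
    (∀ k : ℕ, k ≤ tsec L S x 3 → (4 / 3 : ℚ) * (k : ℚ) ≤ pointWeight L q S x) := by
  constructor
  · rintro k ⟨l, hl, rfl⟩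
    exact (ncard_sub_two_le_tsec_one horder hsize hx hl).trans (tsec_one_le_pointWeight q S x)
  · intro k hk
    have hk' : (k : ℚ) ≤ tsec L S x 3 := by exact_mod_cast hk
    have h₁ := tsec_three_le_tsec_one (L := L) horder hsize hx
    have h₂ := tsec_one_add_tsec_three_div_le_pointWeight horder S x
    linarith
end
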